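/- Let k be the field with two elements and G = S_8 the symmetric group on eight letters. Let M and N be finitely generated left kG-modules. If Ext_{kG}^m(M, N) ≠ 0 for some m > 0, then there exists an integer t with 0 ≤ t ≤ 419 and an integer m_0 such that Ext_{kG}^m(M, N) ≠ 0 for every m ≥ m_0 with m ≡ t (mod 420). -/

import Mathlib

open CategoryTheory

/-!
Dimension shifting along `k → k^G → shift k G` turns `Ext^m(M, N)`, for `m > 0`, into the Tate group
`Ĥ⁰(G, Hom(M, N) ⊗ (shift k G)^{⊗m})`. If `Ext^m(M, N)` vanishes for infinitely many `m` in every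
residue class modulo `d`, then every class of positive degree dividing `d` in the cohomology of `G`
acts locally nilpotently on the Tate cohomology of `Hom(M, N)`.

A faithful permutation representation on `n` points has Stiefel–Whitney classes `w₁, …, wₙ`, and
`wₙ = 0` because the all-ones vector is fixed. They are the coefficients of the Euler class over
`G × {±1}`, which vanishes on every subgroup fixing a nonzero sign vector. A nontrivial `2`-subgroup
`H` has a nontrivial character `χ` whose graph in `G × {±1}` fixes such a vector, so the class
`q ∈ H¹(H, k)` of `χ` satisfies `qⁿ + w₁ qⁿ⁻¹ + ⋯ + wₙ = 0` on `H`. By the Gysin sequence of `ker χ`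
and induction on `|H|`, a module on which the squares of `w₁, …, wₙ₋₁` vanish stably has no Tate
cohomology. Tensoring with the extensions of `k` classified by the `wᵢ` makes these squares vanish,
and local nilpotence lets the vanishing descend to the original module.
-/

namespace ModularRep

open MonoidalCategory
open scoped TensorProduct

universe u

section Null

variable {k : Type u} {G : Type} [Field k] [Group G] {W X Y Z : Rep.{u} k G}

lemma map_mem_invariants (f : X ⟶ Y) {x : X} (hx : x ∈ X.ρ.invariants) :
    f.hom x ∈ Y.ρ.invariants := fun g => by
  rw [← Rep.hom_comm_apply, hx g]

lemma mem_invariants_of_map {f : X ⟶ Y} (hf : Function.Injective f.hom) {x : X}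
    (hx : f.hom x ∈ Y.ρ.invariants) : x ∈ X.ρ.invariants := fun g =>
  hf (by rw [Rep.hom_comm_apply, hx g])

lemma tmul_mem_invariants {x : X} (hx : x ∈ X.ρ.invariants) {y : Y} (hy : y ∈ Y.ρ.invariants) :
    x ⊗ₜ[k] y ∈ (X ⊗ Y).ρ.invariants := fun g => by
  simp [hx g, hy g]

/-- The morphism `𝟙_ ⟶ X` that sends `1` to an invariant element. -/
noncomputable def homOfInvariant {x : X} (hx : x ∈ X.ρ.invariants) : 𝟙_ (Rep.{u} k G) ⟶ X :=
  Rep.ofHom ⟨LinearMap.toSpanSingleton k X x, fun g => by ext; simp [hx g]⟩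

/-- Multiplication `x ↦ x ⊗ y` by an invariant element `y`. -/
noncomputable def tmulRight (X : Rep.{u} k G) {y : Y} (hy : y ∈ Y.ρ.invariants) : X ⟶ X ⊗ Y :=
  (ρ_ X).inv ≫ X ◁ homOfInvariant hy

lemma tmulRight_apply {y : Y} (hy : y ∈ Y.ρ.invariants) (x : X) :
    (tmulRight X hy).hom x = x ⊗ₜ[k] y := by
  change x ⊗ₜ[k] ((1 : k) • y) = _
  rw [one_smul]

lemma tmulRight_naturality (f : X ⟶ Z) {y : Y} (hy : y ∈ Y.ρ.invariants) :
    tmulRight X hy ≫ f ▷ Y = f ≫ tmulRight Z hy := by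
  simp only [tmulRight, Category.assoc, ← whisker_exchange, rightUnitor_inv_naturality_assoc]

lemma tmulRight_whiskerLeft (X : Rep.{u} k G) (f : Y ⟶ Z) {y : Y} (hy : y ∈ Y.ρ.invariants) :
    tmulRight X hy ≫ X ◁ f = tmulRight X (map_mem_invariants f hy) := by
  ext x
  change (X ◁ f).hom ((tmulRight X hy).hom x) = (tmulRight X _).hom x
  rw [tmulRight_apply, tmulRight_apply]
  rfl

lemma tmulRight_tensorUnit {y : Y} (hy : y ∈ Y.ρ.invariants) :
    tmulRight (𝟙_ (Rep.{u} k G)) hy = homOfInvariant hy ≫ (λ_ Y).inv := by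
  rw [tmulRight, ← unitors_inv_equal, ← leftUnitor_inv_naturality]

variable [Fintype G]

/-- The norms of `X`: the quotient of the invariants by the norms is `Ĥ⁰(G, X)`. -/
noncomputable abbrev norms (X : Rep.{u} k G) : Submodule k X := LinearMap.range X.ρ.norm

/-- Vanishing of the Tate cohomology group `Ĥ⁰(G, X)`. -/
def IsTateTrivial (X : Rep.{u} k G) : Prop := X.ρ.invariants ≤ norms X

lemma norms_le_invariants (X : Rep.{u} k G) : norms X ≤ X.ρ.invariants := by
  rintro _ ⟨z, rfl⟩ g
  exact X.ρ.self_norm_apply g z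

lemma map_norm (f : X ⟶ Y) (x : X) : f.hom (X.ρ.norm x) = Y.ρ.norm (f.hom x) := by
  simp [Representation.norm, LinearMap.sum_apply, map_sum, Rep.hom_comm_apply]

lemma map_mem_norms (f : X ⟶ Y) {x : X} (hx : x ∈ norms X) : f.hom x ∈ norms Y := by
  obtain ⟨z, rfl⟩ := hx
  exact ⟨f.hom z, (map_norm f z).symm⟩

lemma tmul_mem_norms {x : X} (hx : x ∈ norms X) {y : Y} (hy : y ∈ Y.ρ.invariants) :
    x ⊗ₜ[k] y ∈ norms (X ⊗ Y) := by
  rw [← tmulRight_apply hy]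
  exact map_mem_norms _ hx

/-- The `G`-linear trace `∑ g, g ∘ φ ∘ g⁻¹` of a linear map `φ`. -/
noncomputable def trace (φ : X →ₗ[k] Y) : X ⟶ Y :=
  Rep.ofHom ⟨(X.ρ.linHom Y.ρ).norm φ, fun g => LinearMap.ext fun x =>
    ((Representation.mem_linHom_invariants_iff_isIntertwining _).1
      fun h => (X.ρ.linHom Y.ρ).self_norm_apply h φ).isIntertwining g x⟩

lemma trace_apply (φ : X →ₗ[k] Y) (x : X) :
    (trace φ).hom x = ∑ g, Y.ρ g (φ (X.ρ g⁻¹ x)) := by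
  change (X.ρ.linHom Y.ρ).norm φ x = _
  simp [Representation.norm, LinearMap.sum_apply]

lemma trace_apply_invariant (φ : X →ₗ[k] Y) {x : X} (hx : x ∈ X.ρ.invariants) :
    (trace φ).hom x = Y.ρ.norm (φ x) := by
  simp [trace_apply, hx _, Representation.norm, LinearMap.sum_apply]

lemma trace_comp (φ : X →ₗ[k] Y) (f : Y ⟶ Z) :
    trace φ ≫ f = trace (f.hom.toLinearMap ∘ₗ φ) := by
  ext x
  simp [trace_apply, Rep.hom_comm_apply]

lemma comp_trace (f : X ⟶ Y) (φ : Y →ₗ[k] Z) :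
    f ≫ trace φ = trace (φ ∘ₗ f.hom.toLinearMap) := by
  ext x
  simp [trace_apply, Rep.hom_comm_apply]

lemma whiskerLeft_trace (W : Rep.{u} k G) (φ : X →ₗ[k] Y) :
    W ◁ trace φ = trace (X := W ⊗ X) (Y := W ⊗ Y) (φ.lTensor W) := by
  ext : 2
  refine TensorProduct.ext' fun w x => ?_
  change w ⊗ₜ[k] (trace φ).hom x = (trace (X := W ⊗ X) (Y := W ⊗ Y) (φ.lTensor W)).hom (w ⊗ₜ x)
  rw [trace_apply, trace_apply (X := W ⊗ X) (Y := W ⊗ Y)]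
  simp [TensorProduct.tmul_sum]

/-- A morphism is null if it vanishes in the stable category, that is, if it is the trace of a
linear map. -/
def IsNull (f : X ⟶ Y) : Prop := ∃ φ : X →ₗ[k] Y, trace φ = f

namespace IsNull

lemma zero : IsNull (0 : X ⟶ Y) := ⟨0, by ext x; simp [trace_apply]⟩

lemma add {f f' : X ⟶ Y} (hf : IsNull f) (hf' : IsNull f') : IsNull (f + f') := by
  obtain ⟨φ, rfl⟩ := hf
  obtain ⟨φ', rfl⟩ := hf'
  exact ⟨φ + φ', by ext x; simp [trace_apply, Finset.sum_add_distrib, Rep.add_hom]⟩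

lemma neg {f : X ⟶ Y} (hf : IsNull f) : IsNull (-f) := by
  obtain ⟨φ, rfl⟩ := hf
  exact ⟨-φ, by ext x; simp [trace_apply, Rep.neg_hom]⟩

lemma comp {f : X ⟶ Y} (hf : IsNull f) (f' : Y ⟶ Z) : IsNull (f ≫ f') := by
  obtain ⟨φ, rfl⟩ := hf
  exact ⟨_, (trace_comp φ f').symm⟩

lemma precomp (f : X ⟶ Y) {f' : Y ⟶ Z} (hf' : IsNull f') : IsNull (f ≫ f') := by
  obtain ⟨φ, rfl⟩ := hf'
  exact ⟨_, (comp_trace f φ).symm⟩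

lemma whiskerLeft {f : X ⟶ Y} (hf : IsNull f) (W : Rep.{u} k G) : IsNull (W ◁ f) := by
  obtain ⟨φ, rfl⟩ := hf
  exact ⟨_, (whiskerLeft_trace W φ).symm⟩

lemma whiskerRight {f : X ⟶ Y} (hf : IsNull f) (W : Rep.{u} k G) : IsNull (f ▷ W) := by
  have h := ((hf.whiskerLeft W).comp (β_ W Y).hom).precomp (β_ X W).hom
  rwa [BraidedCategory.braiding_naturality_right, SymmetricCategory.symmetry_assoc] at h

lemma map_mem_norms {f : X ⟶ Y} (hf : IsNull f) {x : X} (hx : x ∈ X.ρ.invariants) :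
    f.hom x ∈ norms Y := by
  obtain ⟨φ, rfl⟩ := hf
  exact ⟨φ x, (trace_apply_invariant φ hx).symm⟩

lemma exists_extension {f : X ⟶ Z} (hf : IsNull f) {i : X ⟶ Y} (hi : Function.Injective i.hom) :
    ∃ f' : Y ⟶ Z, i ≫ f' = f := by
  obtain ⟨φ, rfl⟩ := hf
  obtain ⟨r, hr⟩ := i.hom.toLinearMap.exists_leftInverse_of_injective (LinearMap.ker_eq_bot.2 hi)
  exact ⟨trace (φ ∘ₗ r), by rw [comp_trace, LinearMap.comp_assoc, hr, LinearMap.comp_id]⟩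

lemma exists_lift {f : X ⟶ Z} (hf : IsNull f) {p : Y ⟶ Z} (hp : Function.Surjective p.hom) :
    ∃ f' : X ⟶ Y, IsNull f' ∧ f' ≫ p = f := by
  obtain ⟨φ, rfl⟩ := hf
  obtain ⟨s, hs⟩ := p.hom.toLinearMap.exists_rightInverse_of_surjective
    (LinearMap.range_eq_top.2 hp)
  exact ⟨trace (s ∘ₗ φ), ⟨s ∘ₗ φ, rfl⟩, by
    rw [trace_comp, ← LinearMap.comp_assoc, hs, LinearMap.id_comp]⟩

end IsNull

lemma isNull_homOfInvariant {x : X} (hx : x ∈ norms X) :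
    IsNull (homOfInvariant (norms_le_invariants X hx)) := by
  obtain ⟨z, hz⟩ := hx
  refine ⟨LinearMap.toSpanSingleton k X z, ?_⟩
  ext : 2
  refine LinearMap.ext_ring ?_
  change (trace (X := 𝟙_ (Rep.{u} k G)) (LinearMap.toSpanSingleton k X z)).hom (1 : k) = (1 : k) • x
  rw [trace_apply_invariant _ (fun g => rfl)]
  simpa using hz

lemma isNull_of_eq_smul {f : X ⟶ Y} {x : X} (hx : x ∈ X.ρ.invariants) {a : X →ₗ[k] k}
    (ha : ∀ z, z = a z • x) (hf : f.hom x ∈ norms Y) : IsNull f := by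
  obtain ⟨y, hy⟩ := hf
  refine ⟨LinearMap.toSpanSingleton k Y y ∘ₗ a, ?_⟩
  ext z
  have hz : z ∈ X.ρ.invariants := ha z ▸ X.ρ.invariants.smul_mem (a z) hx
  change (trace _).hom z = f.hom z
  rw [trace_apply_invariant _ hz, LinearMap.comp_apply, LinearMap.toSpanSingleton_apply, map_smul,
    hy, ← map_smul, ← ha z]

lemma isNull_tmulRight (X : Rep.{u} k G) {y : Y} (hy : y ∈ norms Y) :
    IsNull (tmulRight X (norms_le_invariants Y hy)) :=
  ((isNull_homOfInvariant hy).whiskerLeft X).precomp _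

lemma tmul_mem_norms_of_right {x : X} (hx : x ∈ X.ρ.invariants) {y : Y} (hy : y ∈ norms Y) :
    x ⊗ₜ[k] y ∈ norms (X ⊗ Y) := by
  rw [← tmulRight_apply (norms_le_invariants Y hy)]
  exact (isNull_tmulRight X hy).map_mem_norms hx

lemma IsTateTrivial.of_iso (hX : IsTateTrivial X) (e : X ≅ Y) : IsTateTrivial Y := fun y hy => by
  have h := map_mem_norms e.hom (hX (map_mem_invariants e.inv hy))
  rwa [Rep.hom_inv_apply] at h

lemma isTateTrivial_of_isNull_id (hX : IsNull (𝟙 X)) : IsTateTrivial X := fun _ hx =>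
  hX.map_mem_norms hx

end Null

section Restriction

variable {k : Type u} {G H : Type} [Field k] [Group G] [Group H] [Fintype G] [Fintype H]

lemma exists_sum_coset {θ : H →* G} (hθ : Function.Injective θ) :
    ∃ S : Finset G, S.card = θ.range.index ∧ ∀ (V : Type u) [AddCommMonoid V] (f : G → V),
      ∑ g, f g = ∑ h, ∑ r ∈ S, f (θ h * r) := by
  classical
  obtain ⟨S, hS, -⟩ := θ.range.exists_isComplement_right 1
  refine ⟨S.toFinset, by rw [← hS.card_right, Nat.card_eq_card_toFinset], fun V _ f => ?_⟩
  have hbij : Function.Bijective fun x : H × S => θ x.1 * x.2 :=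
    hS.comp (Equiv.prodCongr (MonoidHom.ofInjective hθ).toEquiv (Equiv.refl S)).bijective
  rw [← Fintype.sum_bijective _ hbij (fun x => f (θ x.1 * x.2)) f fun _ => rfl,
    Fintype.sum_prod_type]
  refine Finset.sum_congr rfl fun h _ => ?_
  rw [← Finset.sum_coe_sort S.toFinset]
  exact Fintype.sum_equiv (Equiv.subtypeEquivRight (by simp)) _ _ fun _ => rfl

variable {X Y : Rep.{u} k G}

lemma res_mem_norms {θ : H →* G} (hθ : Function.Injective θ) {x : X} (hx : x ∈ norms X) :
    x ∈ norms (Rep.res θ X) := by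
  obtain ⟨z, rfl⟩ := hx
  obtain ⟨S, -, hS⟩ := exists_sum_coset.{u} hθ
  refine ⟨∑ r ∈ S, X.ρ r z, ?_⟩
  simp only [Representation.norm, LinearMap.sum_apply, hS, map_sum, map_mul, Module.End.mul_apply,
    MonoidHom.comp_apply]
  exact Finset.sum_comm

lemma IsNull.res {θ : H →* G} (hθ : Function.Injective θ) {f : X ⟶ Y} (hf : IsNull f) :
    IsNull (Rep.resMap θ f) := by
  obtain ⟨φ, rfl⟩ := hf
  obtain ⟨S, -, hS⟩ := exists_sum_coset.{u} hθ
  refine ⟨∑ r ∈ S, Y.ρ r ∘ₗ φ ∘ₗ X.ρ r⁻¹, ?_⟩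
  ext x
  change (trace (X := Rep.res θ X) (Y := Rep.res θ Y) _).hom x = (trace φ).hom x
  rw [trace_apply, trace_apply, hS]
  simp [LinearMap.sum_apply]

lemma isTateTrivial_of_res {θ : H →* G} (hθ : Function.Injective θ)
    (hind : (θ.range.index : k) ≠ 0) (hX : IsTateTrivial (Rep.res θ X)) : IsTateTrivial X := by
  intro x hx
  obtain ⟨z, hz⟩ := hX (fun h => hx (θ h) : x ∈ (Rep.res θ X).ρ.invariants)
  obtain ⟨S, hcard, hS⟩ := exists_sum_coset.{u} hθ
  have hnorm : X.ρ.norm z = (θ.range.index : k) • x := calc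
    X.ρ.norm z = ∑ g, X.ρ g⁻¹ z := by
      rw [Representation.norm, LinearMap.sum_apply]
      exact (Fintype.sum_equiv (Equiv.inv G) _ _ fun g => rfl).symm
    _ = ∑ r ∈ S, X.ρ r⁻¹ (∑ h, X.ρ (θ h)⁻¹ z) := by
      rw [hS, Finset.sum_comm]
      simp only [map_sum, mul_inv_rev, map_mul, Module.End.mul_apply]
    _ = ∑ _r ∈ S, x := by
      refine Finset.sum_congr rfl fun r _ => ?_
      rw [← hx r⁻¹, ← hz, Representation.norm, LinearMap.sum_apply]
      exact congrArg _ (Fintype.sum_equiv (Equiv.inv H) _ _ fun h => by simp)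
    _ = (θ.range.index : k) • x := by rw [Finset.sum_const, hcard, Nat.cast_smul_eq_nsmul]
  exact ⟨(θ.range.index : k)⁻¹ • z, by rw [map_smul, hnorm, inv_smul_smul₀ hind]⟩

end Restriction

section ShortExact

variable {k : Type u} {G H : Type} [Field k] [Group G] [Group H] {A B C : Rep.{u} k G}

/-- `0 ⟶ A ⟶ B ⟶ C ⟶ 0` is a short exact sequence, in elementwise form. -/
structure IsShortExact (i : A ⟶ B) (p : B ⟶ C) : Prop where
  injective : Function.Injective i.hom
  surjective : Function.Surjective p.hom
  exact : Function.Exact i.hom p.hom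

namespace IsShortExact

variable {i : A ⟶ B} {p : B ⟶ C}

lemma whiskerLeft (h : IsShortExact i p) (X : Rep.{u} k G) : IsShortExact (X ◁ i) (X ◁ p) where
  injective := Module.Flat.lTensor_preserves_injective_linearMap (M := X) i.hom.toLinearMap
    h.injective
  surjective := LinearMap.lTensor_surjective X (g := p.hom.toLinearMap) h.surjective
  exact := lTensor_exact X (f := i.hom.toLinearMap) (g := p.hom.toLinearMap) h.exact h.surjective

lemma whiskerRight (h : IsShortExact i p) (X : Rep.{u} k G) : IsShortExact (i ▷ X) (p ▷ X) where
  injective := Module.Flat.rTensor_preserves_injective_linearMap (M := X) i.hom.toLinearMap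
    h.injective
  surjective := LinearMap.rTensor_surjective X (g := p.hom.toLinearMap) h.surjective
  exact := rTensor_exact X (f := i.hom.toLinearMap) (g := p.hom.toLinearMap) h.exact h.surjective

lemma res (h : IsShortExact i p) (θ : H →* G) :
    IsShortExact (Rep.resMap θ i) (Rep.resMap θ p) where
  injective := h.injective
  surjective := h.surjective
  exact := h.exact

lemma iso_comp (h : IsShortExact i p) {A' : Rep.{u} k G} (e : A' ≅ A) :
    IsShortExact (e.hom ≫ i) p where
  injective := h.injective.comp <|
    Function.HasLeftInverse.injective ⟨e.inv.hom, Rep.inv_hom_apply _ _ e⟩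
  surjective := h.surjective
  exact := fun y => (h.exact y).trans ⟨fun ⟨a, ha⟩ => ⟨e.inv.hom a, by simpa using ha⟩,
    fun ⟨a, ha⟩ => ⟨e.hom.hom a, ha⟩⟩

lemma map_comp_apply (h : IsShortExact i p) (a : A) : p.hom (i.hom a) = 0 :=
  (h.exact _).2 ⟨a, rfl⟩

lemma exists_invariant_lift (h : IsShortExact i p) {b : B} (hb : b ∈ B.ρ.invariants)
    (hpb : p.hom b = 0) : ∃ a ∈ A.ρ.invariants, i.hom a = b := by
  obtain ⟨a, rfl⟩ := (h.exact b).1 hpb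
  exact ⟨a, mem_invariants_of_map h.injective hb, rfl⟩

lemma exists_lift (h : IsShortExact i p) {X : Rep.{u} k G} {f : X ⟶ B} (hf : f ≫ p = 0) :
    ∃ f' : X ⟶ A, f' ≫ i = f := by
  choose f' hf' using fun x => (h.exact (f.hom x)).1 congr(($hf).hom x)
  let F : X →ₗ[k] A :=
    { toFun := f'
      map_add' := fun x y => h.injective (by simp only [hf', map_add])
      map_smul' := fun c x => h.injective (by simp only [hf', map_smul, RingHom.id_apply]) }
  refine ⟨Rep.ofHom ⟨F, fun g => LinearMap.ext fun x => h.injective ?_⟩, ?_⟩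
  · change i.hom (f' (X.ρ g x)) = i.hom (A.ρ g (f' x))
    rw [hf', Rep.hom_comm_apply, Rep.hom_comm_apply, hf']
  · ext x
    exact hf' x

lemma exists_desc (h : IsShortExact i p) {X : Rep.{u} k G} {f : B ⟶ X} (hf : i ≫ f = 0) :
    ∃ f' : C ⟶ X, p ≫ f' = f := by
  obtain ⟨s, hs⟩ := p.hom.toLinearMap.exists_rightInverse_of_surjective
    (LinearMap.range_eq_top.2 h.surjective)
  have hsp (c : C) : p.hom (s c) = c := LinearMap.congr_fun hs c
  have hker {b b' : B} (hb : p.hom b = p.hom b') : f.hom b = f.hom b' := by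
    obtain ⟨a, ha⟩ := (h.exact (b - b')).1 (by rw [map_sub, hb, sub_self])
    rw [← sub_eq_zero, ← map_sub, ← ha]
    exact congr(($hf).hom a)
  refine ⟨Rep.ofHom ⟨f.hom.toLinearMap ∘ₗ s, fun g => LinearMap.ext fun c => ?_⟩, ?_⟩
  · change f.hom (s (C.ρ g c)) = X.ρ g (f.hom (s c))
    rw [← Rep.hom_comm_apply]
    exact hker (by rw [hsp, Rep.hom_comm_apply, hsp])
  · ext b
    exact hker (hsp _)

variable [Fintype G]

lemma exists_invariant_sub_mem_norms (h : IsShortExact i p) {b : B} (hb : b ∈ B.ρ.invariants)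
    (hpb : p.hom b ∈ norms C) : ∃ a ∈ A.ρ.invariants, b - i.hom a ∈ norms B := by
  obtain ⟨c, hc⟩ := hpb
  obtain ⟨z, rfl⟩ := h.surjective c
  obtain ⟨a, ha, hia⟩ := h.exists_invariant_lift
    (sub_mem hb (norms_le_invariants B ⟨z, rfl⟩)) (by rw [map_sub, map_norm, hc, sub_self])
  exact ⟨a, ha, z, by rw [hia, sub_sub_cancel]⟩

lemma exists_sub_comp_isNull (h : IsShortExact i p) {X : Rep.{u} k G} {f : X ⟶ B}
    (hf : IsNull (f ≫ p)) : ∃ f' : X ⟶ A, IsNull (f - f' ≫ i) := by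
  obtain ⟨g, hg, hgp⟩ := hf.exists_lift h.surjective
  obtain ⟨f', hf'⟩ := h.exists_lift (f := f - g) (by rw [Preadditive.sub_comp, hgp, sub_self])
  exact ⟨f', by rwa [hf', sub_sub_cancel]⟩

variable {A' B' C' : Rep.{u} k G} {i' : A' ⟶ B'} {p' : B' ⟶ C'} {a : A ⟶ A'} {b : B ⟶ B'}
  {c : C ⟶ C'}

lemma isNull_right (h : IsShortExact i p) (h' : IsShortExact i' p') (hab : i ≫ b = a ≫ i')
    (hbc : p ≫ c = b ≫ p') (hB' : IsNull (𝟙 B')) (ha : IsNull a) : IsNull c := by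
  obtain ⟨f, hf⟩ := ha.exists_extension h.injective
  obtain ⟨d, hd⟩ := h.exists_desc (f := b - f ≫ i') (by
    rw [Preadditive.comp_sub, hab, ← Category.assoc, hf, sub_self])
  have hc : c = d ≫ p' := by
    ext x
    obtain ⟨y, rfl⟩ := h.surjective x
    have h₁ := congr(($hbc).hom y)
    have h₂ := congr(p'.hom (($hd).hom y))
    refine h₁.trans (Eq.trans ?_ h₂.symm)
    change p'.hom (b.hom y) = p'.hom (b.hom y - i'.hom (f.hom y))
    rw [map_sub, h'.map_comp_apply, sub_zero]
  rw [hc, ← Category.comp_id d, Category.assoc, ← Category.assoc]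
  exact (hB'.precomp d).comp p'

lemma isNull_left (h : IsShortExact i p) (h' : IsShortExact i' p') (hab : i ≫ b = a ≫ i')
    (hbc : p ≫ c = b ≫ p') (hB : IsNull (𝟙 B)) (hc : IsNull c) : IsNull a := by
  obtain ⟨f, -, hf⟩ := hc.exists_lift h'.surjective
  obtain ⟨d, hd⟩ := h'.exists_lift (f := b - p ≫ f) (by
    rw [Preadditive.sub_comp, Category.assoc, hf, hbc, sub_self])
  have ha : a = i ≫ d := by
    ext x
    apply h'.injective
    have h₁ := congr(($hab).hom x)
    have h₂ := congr(($hd).hom (i.hom x))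
    refine h₁.symm.trans (Eq.trans ?_ h₂.symm)
    change b.hom (i.hom x) = b.hom (i.hom x) - f.hom (p.hom (i.hom x))
    rw [h.map_comp_apply, map_zero, sub_zero]
  rw [ha, ← Category.id_comp d]
  exact (hB.comp d).precomp i

end IsShortExact

end ShortExact

section Functions

variable (k : Type u) (G : Type) [Field k] [Group G]

/-- The action of `G` on the `k`-valued functions on a `G`-set. -/
noncomputable def translation (S : Type) [MulAction G S] : Representation k G (S → k) where
  toFun g := LinearMap.funLeft k k fun s => g⁻¹ • s
  map_one' := by
    refine LinearMap.ext fun f => funext fun s => ?_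
    simp [LinearMap.funLeft]
  map_mul' g h := by
    refine LinearMap.ext fun f => funext fun s => ?_
    simp [LinearMap.funLeft, mul_smul]

variable {k G} in
lemma translation_apply {S : Type} [MulAction G S] (g : G) (f : S → k) (s : S) :
    translation k G S g f s = f (g⁻¹ • s) := rfl

/-- The representation of `G` on the `k`-valued functions on a `G`-set. -/
noncomputable abbrev functions (S : Type) [MulAction G S] : Rep.{u} k G :=
  Rep.of (translation k G S)

/-- The free module of functions on `G`. -/
noncomputable abbrev coregular : Rep.{u} k G := functions k G G

lemma one_mem_invariants_coregular : (1 : G → k) ∈ (coregular k G).ρ.invariants := fun _ => rfl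

/-- The inclusion of the constant functions. -/
noncomputable def constants : 𝟙_ (Rep.{u} k G) ⟶ coregular k G :=
  homOfInvariant (one_mem_invariants_coregular k G)

/-- The cokernel of the inclusion of the constant functions. Tensoring with it is the shift functor
of the stable module category. -/
noncomputable def shift : Rep.{u} k G :=
  (coregular k G).quotient (Submodule.span k {(1 : G → k)}) fun _ =>
    (Submodule.span_singleton_le_iff_mem _ _).2 (Submodule.mem_span_singleton_self _)

/-- The projection of the functions on `G` onto `shift k G`. -/
noncomputable def toShift : coregular k G ⟶ shift k G := (coregular k G).mkQ _ _

lemma toShift_surjective : Function.Surjective (toShift k G).hom := Submodule.mkQ_surjective _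

variable {k G} in
lemma toShift_eq_zero_iff {f : G → k} : (toShift k G).hom f = 0 ↔ ∃ c : k, c • 1 = f :=
  (Submodule.Quotient.mk_eq_zero _).trans Submodule.mem_span_singleton

lemma toShift_one : (toShift k G).hom (1 : G → k) = 0 := toShift_eq_zero_iff.2 ⟨1, one_smul k _⟩

lemma isShortExact_constants_toShift : IsShortExact (constants k G) (toShift k G) where
  injective := fun (a b : k) h => by
    have h1 : a • (1 : k) = b • (1 : k) := congrFun h 1
    simpa only [smul_eq_mul, mul_one] using h1
  surjective := toShift_surjective k G
  exact := fun _ => toShift_eq_zero_iff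

variable {k G} in
lemma isShortExact_tmulRight_one (B : Rep.{u} k G) :
    IsShortExact (tmulRight B (one_mem_invariants_coregular k G)) (B ◁ toShift k G) :=
  ((isShortExact_constants_toShift k G).whiskerLeft B).iso_comp (ρ_ B).symm

/-- The `n`-fold shift of the trivial module: `Ĥⁿ(G, X) = Ĥ⁰(G, X ⊗ shiftPow k G n)`. -/
noncomputable def shiftPow : ℕ → Rep.{u} k G
  | 0 => 𝟙_ _
  | n + 1 => shiftPow n ⊗ shift k G

/-- The isomorphism `shiftPow k G m ⊗ shiftPow k G n ≅ shiftPow k G (m + n)` that underlies the cup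
product. -/
noncomputable def shiftPowAdd (m : ℕ) : ∀ n : ℕ,
    shiftPow k G m ⊗ shiftPow k G n ≅ shiftPow k G (m + n)
  | 0 => ρ_ _
  | n + 1 => (α_ _ _ _).symm ≪≫ whiskerRightIso (shiftPowAdd m n) (shift k G)

variable [Fintype G]

lemma isNull_id_coregular : IsNull (𝟙 (coregular k G)) := by
  classical
  refine ⟨(LinearMap.mulLeft k (Pi.single 1 1) : (G → k) →ₗ[k] G → k), ?_⟩
  ext : 2
  refine LinearMap.ext fun f => funext fun s => ?_
  change (trace (X := coregular k G) (Y := coregular k G) _).hom f s = f s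
  rw [trace_apply, Finset.sum_apply, Finset.sum_eq_single s]
  · rw [translation_apply]
    simp [translation_apply]
  · intro g _ hg
    rw [translation_apply, LinearMap.mulLeft_apply, Pi.mul_apply, Pi.single_eq_of_ne, zero_mul]
    simpa [inv_mul_eq_one] using hg
  · simp

variable {k G}

lemma isNull_id_tensor_coregular (W : Rep.{u} k G) : IsNull (𝟙 (W ⊗ coregular k G)) := by
  rw [← MonoidalCategory.whiskerLeft_id]
  exact (isNull_id_coregular k G).whiskerLeft W

lemma isTateTrivial_tensor_coregular (X : Rep.{u} k G) : IsTateTrivial (X ⊗ coregular k G) :=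
  isTateTrivial_of_isNull_id (isNull_id_tensor_coregular X)

lemma isNull_of_factors_coregular {X Y Z : Rep.{u} k G} (f : X ⟶ Y ⊗ coregular k G)
    (f' : Y ⊗ coregular k G ⟶ Z) : IsNull (f ≫ f') := by
  have h := ((isNull_id_tensor_coregular Y).precomp f).comp f'
  rwa [Category.comp_id] at h

end Functions

section Braiding

variable {k : Type u} {G : Type} [Field k] [Group G]

variable (k G) in
/-- The bilinear map `(f, f') ↦ [f'] ⊗ f + [f] ⊗ f' - [f f'] ⊗ 1` on functions on `G`. It vanishes
when one of its arguments is constant. -/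
noncomputable def symmetrizer : (G → k) →ₗ[k] (G → k) →ₗ[k] shift k G ⊗[k] (G → k) :=
  LinearMap.mk₂ k (fun f f' => (toShift k G).hom f' ⊗ₜ[k] f + (toShift k G).hom f ⊗ₜ[k] f' -
      (toShift k G).hom (f * f') ⊗ₜ[k] 1)
    (fun a b c => by
      simp only [map_add, TensorProduct.add_tmul, TensorProduct.tmul_add, add_mul]
      abel)
    (fun a b c => by
      simp only [map_smul, TensorProduct.tmul_smul, TensorProduct.smul_tmul', smul_add, smul_sub,
        smul_mul_assoc])
    (fun a b c => by
      simp only [map_add, TensorProduct.add_tmul, TensorProduct.tmul_add, mul_add]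
      abel)
    (fun a b c => by
      simp only [map_smul, TensorProduct.tmul_smul, TensorProduct.smul_tmul', smul_add, smul_sub,
        mul_smul_comm])

lemma symmetrizer_apply (f f' : G → k) : symmetrizer k G f f' =
    (toShift k G).hom f' ⊗ₜ[k] f + (toShift k G).hom f ⊗ₜ[k] f' -
      (toShift k G).hom (f * f') ⊗ₜ[k] 1 := rfl

lemma symmetrizer_one_left (f : G → k) : symmetrizer k G 1 f = 0 := by
  rw [symmetrizer_apply, toShift_one, one_mul, TensorProduct.zero_tmul, add_zero, sub_self]

lemma symmetrizer_one_right (f : G → k) : symmetrizer k G f 1 = 0 := by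
  rw [symmetrizer_apply, toShift_one, mul_one, TensorProduct.zero_tmul, zero_add, sub_self]

lemma exists_symmetrizer_lift :
    ∃ ψ : shift k G ⊗ shift k G ⟶ shift k G ⊗ coregular k G, ∀ f f' : G → k,
      ψ.hom ((toShift k G).hom f ⊗ₜ[k] (toShift k G).hom f') = symmetrizer k G f f' := by
  let b₁ : shift k G →ₗ[k] (G → k) →ₗ[k] shift k G ⊗[k] (G → k) :=
    Submodule.liftQ _ (symmetrizer k G) <| (Submodule.span_singleton_le_iff_mem _ _).2 <|
      LinearMap.ext symmetrizer_one_left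
  let b : shift k G →ₗ[k] shift k G →ₗ[k] shift k G ⊗[k] (G → k) :=
    (Submodule.liftQ _ b₁.flip <| (Submodule.span_singleton_le_iff_mem _ _).2 <|
      Submodule.linearMap_qext _ (LinearMap.ext symmetrizer_one_right)).flip
  have hb (f f' : G → k) : TensorProduct.lift b ((toShift k G).hom f ⊗ₜ[k] (toShift k G).hom f') =
    symmetrizer k G f f' := rfl
  refine ⟨Rep.ofHom ⟨TensorProduct.lift b, fun g => TensorProduct.ext' fun q q' => ?_⟩, hb⟩
  obtain ⟨f, rfl⟩ := toShift_surjective k G q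
  obtain ⟨f', rfl⟩ := toShift_surjective k G q'
  change TensorProduct.lift b ((shift k G).ρ g ((toShift k G).hom f) ⊗ₜ
      (shift k G).ρ g ((toShift k G).hom f')) =
    (shift k G ⊗ coregular k G).ρ g
      (TensorProduct.lift b ((toShift k G).hom f ⊗ₜ (toShift k G).hom f'))
  rw [← Rep.hom_comm_apply, ← Rep.hom_comm_apply, hb, hb, symmetrizer_apply, symmetrizer_apply]
  simp only [map_add, map_sub]
  rfl

variable [Fintype G]

lemma isNull_braiding_shift_add_id :
    IsNull ((β_ (shift k G) (shift k G)).hom + 𝟙 (shift k G ⊗ shift k G)) := by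
  obtain ⟨ψ, hψ⟩ := exists_symmetrizer_lift (k := k) (G := G)
  convert isNull_of_factors_coregular ψ (shift k G ◁ toShift k G)
  ext : 2
  refine TensorProduct.ext' fun q q' => ?_
  obtain ⟨f, rfl⟩ := toShift_surjective k G q
  obtain ⟨f', rfl⟩ := toShift_surjective k G q'
  change (toShift k G).hom f' ⊗ₜ[k] (toShift k G).hom f +
      (toShift k G).hom f ⊗ₜ[k] (toShift k G).hom f' =
    (shift k G ◁ toShift k G).hom (ψ.hom ((toShift k G).hom f ⊗ₜ[k] (toShift k G).hom f'))
  rw [hψ, symmetrizer_apply, map_sub, map_add]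
  change _ = _ ⊗ₜ[k] (toShift k G).hom f + _ ⊗ₜ[k] (toShift k G).hom f' -
    _ ⊗ₜ[k] (toShift k G).hom 1
  rw [toShift_one, TensorProduct.tmul_zero, sub_zero]
  rfl

/-- The symmetry of `X ⊗ X` is the identity in the stable category. -/
def IsStablySymmetric (X : Rep.{u} k G) : Prop := IsNull ((β_ X X).hom - 𝟙 (X ⊗ X))

lemma isStablySymmetric_tensorUnit : IsStablySymmetric (𝟙_ (Rep.{u} k G)) := by
  unfold IsStablySymmetric
  rw [braiding_tensorUnit_left, unitors_equal, Iso.hom_inv_id, sub_self]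
  exact IsNull.zero

lemma IsStablySymmetric.tensor {X Y : Rep.{u} k G} (hX : IsStablySymmetric X)
    (hY : IsStablySymmetric Y) : IsStablySymmetric (X ⊗ Y) := by
  have h := ((hX.whiskerRight (Y ⊗ Y)).comp (_ ◁ (β_ Y Y).hom)).add (hY.whiskerLeft (X ⊗ X))
  unfold IsStablySymmetric
  convert (h.comp (tensorμ X X Y Y)).precomp (tensorμ X Y X Y) using 1
  ext : 2
  refine TensorProduct.ext_fourfold' fun x y x' y' => ?_
  change (x' ⊗ₜ[k] y') ⊗ₜ[k] (x ⊗ₜ[k] y) - (x ⊗ₜ[k] y) ⊗ₜ[k] (x' ⊗ₜ[k] y') =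
    (tensorμ X X Y Y).hom (((x' ⊗ₜ[k] x - x ⊗ₜ[k] x') ⊗ₜ[k] (y' ⊗ₜ[k] y)) +
      (x ⊗ₜ[k] x') ⊗ₜ[k] (y' ⊗ₜ[k] y - y ⊗ₜ[k] y'))
  rw [TensorProduct.sub_tmul, TensorProduct.tmul_sub, sub_add_sub_cancel, map_sub]
  rfl

lemma add_self_eq_zero_of_charTwo [CharP k 2] {V : Type*} [AddCommGroup V] [Module k V] (v : V) :
    v + v = 0 := by
  rw [← two_smul k, CharTwo.two_eq_zero, zero_smul]

lemma isStablySymmetric_shiftPow [CharP k 2] : ∀ n, IsStablySymmetric (shiftPow k G n)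
  | 0 => isStablySymmetric_tensorUnit
  | n + 1 => (isStablySymmetric_shiftPow n).tensor <| by
    unfold IsStablySymmetric
    rw [sub_eq_add_neg, neg_eq_of_add_eq_zero_left (add_self_eq_zero_of_charTwo (k := k) _)]
    exact isNull_braiding_shift_add_id

end Braiding

section FiberProduct

variable {k : Type u} {G : Type} [Field k] [Group G] {A B C Z : Rep.{u} k G}

/-- The fiber product of two morphisms with common target. -/
noncomputable def fiberProduct (p : B ⟶ C) (f : Z ⟶ C) : Rep.{u} k G :=
  Rep.of (Representation.IntertwiningMap.ker (B.ρ.prod Z.ρ) C.ρ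
    (p.hom.comp (.fst k B.ρ Z.ρ) - f.hom.comp (.snd k B.ρ Z.ρ))).toRepresentation

namespace fiberProduct

variable (p : B ⟶ C) (f : Z ⟶ C)

/-- The first projection of a fiber product. -/
noncomputable def fst : fiberProduct p f ⟶ B :=
  Rep.ofHom ⟨LinearMap.fst k B Z ∘ₗ Submodule.subtype _, fun _ => rfl⟩

/-- The second projection of a fiber product. -/
noncomputable def snd : fiberProduct p f ⟶ Z :=
  Rep.ofHom ⟨LinearMap.snd k B Z ∘ₗ Submodule.subtype _, fun _ => rfl⟩

lemma condition : fst p f ≫ p = snd p f ≫ f := by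
  ext d
  exact sub_eq_zero.1 d.2

variable {p f}

/-- The map from the kernel `A` of `p` to the fiber product of `p` and `f`. -/
noncomputable def ofKernel {i : A ⟶ B} (h : IsShortExact i p) : A ⟶ fiberProduct p f :=
  Rep.ofHom ⟨(i.hom.toLinearMap.prod 0).codRestrict _ fun a => sub_eq_zero.2 <|
      (h.map_comp_apply a).trans (map_zero f.hom).symm,
    fun g => LinearMap.ext fun a => Subtype.ext <| Prod.ext
      (Rep.hom_comm_apply i g a) (map_zero (Z.ρ g)).symm⟩

lemma isShortExact {i : A ⟶ B} (h : IsShortExact i p) :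
    IsShortExact (ofKernel (f := f) h) (snd p f) where
  injective := fun x y hxy => h.injective congr((fst p f).hom $hxy)
  surjective := fun z => by
    obtain ⟨b, hb⟩ := h.surjective (f.hom z)
    exact ⟨⟨(b, z), sub_eq_zero.2 hb⟩, rfl⟩
  exact := fun d => by
    constructor
    · intro hd
      obtain ⟨a, ha⟩ := (h.exact d.1.1).1 <| (sub_eq_zero.1 d.2).trans <|
        (congrArg f.hom hd).trans (map_zero f.hom)
      exact ⟨a, Subtype.ext (Prod.ext ha hd.symm)⟩
    · rintro ⟨a, rfl⟩
      rfl

end fiberProduct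

end FiberProduct

section ClassExtension

variable {k : Type u} {G : Type} [Field k] [Group G] {B : Rep.{u} k G}
  {w : (B ⊗ shift k G : Rep.{u} k G)} (hw : w ∈ (B ⊗ shift k G).ρ.invariants)

/-- The extension of the trivial module by `B` classified by an invariant element `w` of
`B ⊗ shift k G`: the pullback of `B ⊗ coregular k G ⟶ B ⊗ shift k G` along `w`. -/
noncomputable def classExtension : Rep.{u} k G :=
  fiberProduct (B ◁ toShift k G) (homOfInvariant hw)

namespace classExtension

/-- The inclusion of the kernel of the extension classified by `w`. -/
noncomputable def inl : B ⟶ classExtension hw :=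
  fiberProduct.ofKernel (isShortExact_tmulRight_one B)

/-- The projection of the extension classified by `w` onto the trivial module. -/
noncomputable def toUnit : classExtension hw ⟶ 𝟙_ (Rep.{u} k G) := fiberProduct.snd _ _

/-- The map to `B ⊗ coregular k G` that comes from the definition as a pullback. -/
noncomputable def toCoregular : classExtension hw ⟶ B ⊗ coregular k G := fiberProduct.fst _ _

lemma isShortExact : IsShortExact (inl hw) (toUnit hw) := fiberProduct.isShortExact _

lemma inl_toCoregular :
    inl hw ≫ toCoregular hw = tmulRight B (one_mem_invariants_coregular k G) := rfl

lemma toCoregular_toShift :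
    toCoregular hw ≫ B ◁ toShift k G = toUnit hw ≫ homOfInvariant hw :=
  fiberProduct.condition _ _

variable {hw} in
lemma mem_invariants {X : Rep.{u} k G} {y : (X ⊗ classExtension hw : Rep.{u} k G)}
    (h₁ : (X ◁ toUnit hw).hom y ∈ (X ⊗ 𝟙_ (Rep.{u} k G)).ρ.invariants)
    (h₂ : (X ◁ toCoregular hw).hom y ∈ (X ⊗ (B ⊗ coregular k G)).ρ.invariants) :
    y ∈ (X ⊗ classExtension hw).ρ.invariants := fun g => by
  obtain ⟨b, hb⟩ := (((isShortExact hw).whiskerLeft X).exact ((X ⊗ classExtension hw).ρ g y - y)).1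
    (by rw [map_sub, Rep.hom_comm_apply, h₁ g, sub_self])
  have hb0 : (X ◁ tmulRight B (one_mem_invariants_coregular k G)).hom b = 0 := by
    rw [← inl_toCoregular hw, MonoidalCategory.whiskerLeft_comp]
    change (X ◁ toCoregular hw).hom ((X ◁ inl hw).hom b) = 0
    rw [hb, map_sub, Rep.hom_comm_apply, h₂ g, sub_self]
  rw [((isShortExact_tmulRight_one B).whiskerLeft X).injective (hb0.trans (map_zero _).symm),
    map_zero] at hb
  exact sub_eq_zero.1 hb.symm

variable [Fintype G]

lemma mem_norms_of_tmul {X : Rep.{u} k G} (hX : IsTateTrivial (X ⊗ classExtension hw)) {x : X}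
    (hx : x ∈ X.ρ.invariants) (hxw : x ⊗ₜ[k] w ∈ norms (X ⊗ (B ⊗ shift k G))) : x ∈ norms X := by
  have hone : x ⊗ₜ[k] (1 : k) ∈ (X ⊗ 𝟙_ (Rep.{u} k G)).ρ.invariants :=
    tmul_mem_invariants hx fun _ => rfl
  obtain ⟨y, hy⟩ := ((isShortExact hw).whiskerLeft X).surjective (x ⊗ₜ[k] (1 : k))
  have hyw : (X ◁ (B ◁ toShift k G)).hom ((X ◁ toCoregular hw).hom y) = x ⊗ₜ[k] w := by
    have h := congr((X ◁ $(toCoregular_toShift hw)).hom y)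
    rw [MonoidalCategory.whiskerLeft_comp, MonoidalCategory.whiskerLeft_comp] at h
    refine h.trans ((congrArg (X ◁ homOfInvariant hw).hom hy).trans ?_)
    change x ⊗ₜ[k] ((1 : k) • w) = _
    rw [one_smul]
  obtain ⟨z, hz⟩ := hxw
  have hE := (isShortExact_tmulRight_one B).whiskerLeft X
  obtain ⟨v, rfl⟩ := hE.surjective z
  obtain ⟨b, hb⟩ := (hE.exact ((X ◁ toCoregular hw).hom y - (X ⊗ (B ⊗ coregular k G)).ρ.norm v)).1
    (by rw [map_sub, hyw, map_norm, hz, sub_self])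
  have hc : (X ◁ toUnit hw).hom (y - (X ◁ inl hw).hom b) = x ⊗ₜ[k] (1 : k) := by
    rw [map_sub, ((isShortExact hw).whiskerLeft X).map_comp_apply, sub_zero, hy]
  have hh : (X ◁ toCoregular hw).hom (y - (X ◁ inl hw).hom b) =
      (X ⊗ (B ⊗ coregular k G)).ρ.norm v := by
    rw [← inl_toCoregular hw, MonoidalCategory.whiskerLeft_comp] at hb
    rw [map_sub, sub_eq_iff_eq_add', ← sub_eq_iff_eq_add, ← hb]
    rfl
  have hinv := mem_invariants (hc ▸ hone) (hh ▸ norms_le_invariants _ ⟨v, rfl⟩)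
  have hnorm := map_mem_norms (ρ_ X).hom (map_mem_norms (X ◁ toUnit hw) (hX hinv))
  rw [hc] at hnorm
  simpa using hnorm

lemma inl_mem_norms : (inl hw ▷ shift k G).hom w ∈ norms (classExtension hw ⊗ shift k G) := by
  obtain ⟨d, hd⟩ := (isShortExact hw).surjective (1 : k)
  let v : (classExtension hw ⊗ coregular k G : Rep.{u} k G) :=
    (inl hw ▷ coregular k G).hom ((toCoregular hw).hom d) - d ⊗ₜ[k] (1 : G → k)
  have hv : v ∈ (classExtension hw ⊗ coregular k G).ρ.invariants := fun g => by
    obtain ⟨b, hb⟩ := ((isShortExact hw).exact ((classExtension hw).ρ g d - d)).1 (by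
      rw [map_sub, Rep.hom_comm_apply, hd]
      exact sub_self _)
    have hu : (B ⊗ coregular k G).ρ g ((toCoregular hw).hom d) - (toCoregular hw).hom d =
        b ⊗ₜ[k] (1 : G → k) := by
      rw [← Rep.hom_comm_apply, ← map_sub, ← hb,
        ← tmulRight_apply (one_mem_invariants_coregular k G)]
      rfl
    have hρ : (classExtension hw ⊗ coregular k G).ρ g (d ⊗ₜ[k] (1 : G → k)) =
      (classExtension hw).ρ g d ⊗ₜ[k] (1 : G → k) := rfl
    rw [map_sub, ← Rep.hom_comm_apply, hρ, ← sub_eq_zero, sub_sub_sub_comm, ← map_sub, hu,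
      ← TensorProduct.sub_tmul, ← hb, sub_eq_zero]
    rfl
  have hvw : (classExtension hw ◁ toShift k G).hom v = (inl hw ▷ shift k G).hom w := calc
    _ = (classExtension hw ◁ toShift k G).hom
          ((inl hw ▷ coregular k G).hom ((toCoregular hw).hom d)) -
        d ⊗ₜ[k] (toShift k G).hom 1 := map_sub _ _ _
    _ = (inl hw ▷ shift k G).hom ((B ◁ toShift k G).hom ((toCoregular hw).hom d)) := by
      rw [toShift_one, TensorProduct.tmul_zero, sub_zero]
      exact congr(($(whisker_exchange (inl hw) (toShift k G))).hom ((toCoregular hw).hom d)).symm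
    _ = (inl hw ▷ shift k G).hom w := by
      have h := congr(($(toCoregular_toShift hw)).hom d).trans (congrArg (homOfInvariant hw).hom hd)
      exact congrArg (inl hw ▷ shift k G).hom (h.trans (one_smul k w))
  rw [← hvw]
  exact map_mem_norms _ (isTateTrivial_tensor_coregular (classExtension hw) hv)

lemma isNull_inl_tmulRight (hB : IsStablySymmetric B) :
    IsNull (inl hw ≫ tmulRight (classExtension hw) hw) := by
  have hswap := (((hB.whiskerRight (shift k G)).precomp (α_ B B (shift k G)).inv).precomp
    (tmulRight B hw)).comp ((α_ B B (shift k G)).hom ≫ inl hw ▷ (B ⊗ shift k G))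
  have hnorm := (isNull_tmulRight B (inl_mem_norms hw)).comp
    ((α_ B (classExtension hw) (shift k G)).inv ≫
      (β_ B (classExtension hw)).hom ▷ shift k G ≫ (α_ (classExtension hw) B (shift k G)).hom)
  have hperm : inl hw ▷ (B ⊗ shift k G) = B ◁ (inl hw ▷ shift k G) ≫
      (α_ B (classExtension hw) (shift k G)).inv ≫ (β_ B (classExtension hw)).hom ▷ shift k G ≫
        (α_ (classExtension hw) B (shift k G)).hom -
      (α_ B B (shift k G)).inv ≫ ((β_ B B).hom - 𝟙 (B ⊗ B)) ▷ shift k G ≫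
        (α_ B B (shift k G)).hom ≫ inl hw ▷ (B ⊗ shift k G) := by
    ext : 2
    refine TensorProduct.ext_threefold' fun x y q => ?_
    change (inl hw).hom x ⊗ₜ[k] (y ⊗ₜ[k] q) = (inl hw).hom y ⊗ₜ[k] (x ⊗ₜ[k] q) -
      ((α_ B B (shift k G)).hom ≫ inl hw ▷ (B ⊗ shift k G)).hom
        ((y ⊗ₜ[k] x - x ⊗ₜ[k] y) ⊗ₜ[k] q)
    rw [TensorProduct.sub_tmul, map_sub]
    exact (sub_sub_cancel _ _).symm
  rw [← tmulRight_naturality, hperm, Preadditive.comp_sub, ← Category.assoc (tmulRight B hw),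
    tmulRight_whiskerLeft, sub_eq_add_neg]
  exact hnorm.add (by simpa only [Category.assoc] using hswap.neg)

lemma isNull_tmulRight_tmulRight (hB : IsStablySymmetric B) :
    IsNull (tmulRight (classExtension hw) hw ≫
      tmulRight (classExtension hw ⊗ (B ⊗ shift k G)) hw) := by
  have hW := (isShortExact hw).whiskerRight (B ⊗ shift k G)
  have hnull : IsNull (tmulRight (classExtension hw) hw ≫ toUnit hw ▷ (B ⊗ shift k G)) := by
    rw [tmulRight_naturality, tmulRight_tensorUnit, ← Category.assoc, ← toCoregular_toShift,
      Category.assoc]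
    exact isNull_of_factors_coregular _ _
  obtain ⟨f, hf⟩ := hW.exists_sub_comp_isNull hnull
  have hinl : inl hw ▷ (B ⊗ shift k G) ≫ tmulRight (classExtension hw ⊗ (B ⊗ shift k G)) hw =
      (inl hw ≫ tmulRight (classExtension hw) hw) ▷ (B ⊗ shift k G) ≫
        (α_ _ _ _).hom ≫ _ ◁ (β_ _ _).hom ≫ (α_ _ _ _).inv := by
    ext : 2
    refine TensorProduct.ext' fun b a => ?_
    change (tmulRight (classExtension hw ⊗ (B ⊗ shift k G)) hw).hom ((inl hw).hom b ⊗ₜ[k] a) =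
      ((α_ _ _ _).hom ≫ _ ◁ (β_ (B ⊗ shift k G) (B ⊗ shift k G)).hom ≫ (α_ _ _ _).inv :
        (classExtension hw ⊗ (B ⊗ shift k G)) ⊗ (B ⊗ shift k G) ⟶ _).hom
        ((tmulRight (classExtension hw) hw).hom ((inl hw).hom b) ⊗ₜ[k] a)
    rw [tmulRight_apply, tmulRight_apply]
    rfl
  have hinlnull := (((isNull_inl_tmulRight hw hB).whiskerRight (B ⊗ shift k G)).comp
    ((α_ _ _ _).hom ≫ _ ◁ (β_ _ _).hom ≫ (α_ _ _ _).inv)).precomp f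
  rw [← hinl] at hinlnull
  have h := (hf.comp (tmulRight (classExtension hw ⊗ (B ⊗ shift k G)) hw)).add hinlnull
  rwa [Preadditive.sub_comp, Category.assoc, sub_add_cancel] at h

end classExtension

end ClassExtension

section SquareNull

variable {k : Type u} {G : Type} [Field k] [Group G] [Fintype G] {W X Y Z : Rep.{u} k G} {w : W}

/-- Multiplication by the square of `w` is zero on `X` in the stable category. -/
def IsSquareNull (hw : w ∈ W.ρ.invariants) (X : Rep.{u} k G) : Prop :=
  IsNull (tmulRight X hw ≫ tmulRight (X ⊗ W) hw)

variable {hw : w ∈ W.ρ.invariants}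

lemma IsSquareNull.of_iso (h : IsSquareNull hw X) (e : X ≅ Y) : IsSquareNull hw Y := by
  have h' := (h.precomp e.inv).comp ((e.hom ▷ W) ▷ W)
  rwa [Category.assoc, Category.assoc, tmulRight_naturality, ← Category.assoc (tmulRight X hw),
    tmulRight_naturality, Category.assoc, e.inv_hom_id_assoc] at h'

lemma IsSquareNull.tensor_left (h : IsSquareNull hw X) (Z : Rep.{u} k G) :
    IsSquareNull hw (Z ⊗ X) := by
  have h' := (h.whiskerLeft Z).comp ((α_ Z (X ⊗ W) W).inv ≫ (α_ Z X W).inv ▷ W)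
  unfold IsSquareNull
  convert h' using 1
  ext : 2
  refine TensorProduct.ext' fun z x => ?_
  change (tmulRight ((Z ⊗ X) ⊗ W) hw).hom ((tmulRight (Z ⊗ X) hw).hom (z ⊗ₜ[k] x)) =
    ((α_ Z (X ⊗ W) W).inv ≫ (α_ Z X W).inv ▷ W).hom
      (z ⊗ₜ[k] (tmulRight (X ⊗ W) hw).hom ((tmulRight X hw).hom x))
  rw [tmulRight_apply, tmulRight_apply, tmulRight_apply, tmulRight_apply]
  rfl

lemma IsSquareNull.tensor_right (h : IsSquareNull hw X) (Z : Rep.{u} k G) :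
    IsSquareNull hw (X ⊗ Z) :=
  (h.tensor_left Z).of_iso (β_ Z X)

end SquareNull

section Nilpotent

variable {k : Type u} {G : Type} [Field k] [Group G] {W X Y Z : Rep.{u} k G}

/-- `X` is an iterated shift of `Y`. -/
def IsShiftOf (X Y : Rep.{u} k G) : Prop := ∃ m, Nonempty (X ≅ Y ⊗ shiftPow k G m)

lemma isShiftOf_tensor_shiftPow (Y : Rep.{u} k G) (m : ℕ) : IsShiftOf (Y ⊗ shiftPow k G m) Y :=
  ⟨m, ⟨Iso.refl _⟩⟩

namespace IsShiftOf

lemma refl (Y : Rep.{u} k G) : IsShiftOf Y Y := ⟨0, ⟨(ρ_ Y).symm⟩⟩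

lemma of_iso (h : IsShiftOf Y Z) (e : X ≅ Y) : IsShiftOf X Z := by
  obtain ⟨m, ⟨e'⟩⟩ := h
  exact ⟨m, ⟨e ≪≫ e'⟩⟩

lemma trans (h : IsShiftOf X Y) (h' : IsShiftOf Y Z) : IsShiftOf X Z := by
  obtain ⟨m, ⟨e⟩⟩ := h
  obtain ⟨n, ⟨e'⟩⟩ := h'
  exact ⟨n + m, ⟨e ≪≫ whiskerRightIso e' _ ≪≫ α_ _ _ _ ≪≫ whiskerLeftIso _ (shiftPowAdd k G n m)⟩⟩

lemma tensor_right (h : IsShiftOf X Y) (Z : Rep.{u} k G) : IsShiftOf (X ⊗ Z) (Y ⊗ Z) := by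
  obtain ⟨m, ⟨e⟩⟩ := h
  exact ⟨m, ⟨whiskerRightIso e Z ≪≫ α_ _ _ _ ≪≫ whiskerLeftIso _ (β_ _ _) ≪≫ (α_ _ _ _).symm⟩⟩

lemma tensor_shiftPow (h : IsShiftOf X Y) (m : ℕ) : IsShiftOf (X ⊗ shiftPow k G m) Y :=
  (isShiftOf_tensor_shiftPow X m).trans h

end IsShiftOf

variable [Fintype G]

/-- `x ⊗ w ⊗ ⋯ ⊗ w`, with `n` factors `w`, is a norm. -/
def IsKilledByPow (w : W) : ℕ → ∀ X : Rep.{u} k G, X → Prop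
  | 0, X, x => x ∈ norms X
  | n + 1, X, x => IsKilledByPow w n (X ⊗ W) (x ⊗ₜ[k] w)

namespace IsKilledByPow

variable {w : W}

lemma of_mem_norms (hw : w ∈ W.ρ.invariants) : ∀ (n : ℕ) {X : Rep.{u} k G} {x : X},
    x ∈ norms X → IsKilledByPow w n X x
  | 0, _, _, hx => hx
  | n + 1, _, _, hx => of_mem_norms hw n (tmul_mem_norms hx hw)

lemma map : ∀ {n : ℕ} {X Y : Rep.{u} k G} (f : X ⟶ Y) {x : X},
    IsKilledByPow w n X x → IsKilledByPow w n Y (f.hom x)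
  | 0, _, _, f, _, hx => map_mem_norms f hx
  | n + 1, _, _, f, _, hx => map (n := n) (f ▷ W) hx

lemma add : ∀ {n : ℕ} {X : Rep.{u} k G} {x y : X},
    IsKilledByPow w n X x → IsKilledByPow w n X y → IsKilledByPow w n X (x + y)
  | 0, _, _, _, hx, hy => add_mem hx hy
  | n + 1, X, x, y, hx, hy => by
    change IsKilledByPow w n (X ⊗ W) ((x + y) ⊗ₜ[k] w)
    rw [TensorProduct.add_tmul]
    exact add hx hy

end IsKilledByPow

/-- Some power of `w` kills any given class in `Ĥ⁰(G, X)`, for every iterated shift `X` of `Y`. -/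
def IsLocallyNilpotent (w : W) (Y : Rep.{u} k G) : Prop :=
  ∀ X, IsShiftOf X Y → ∀ x ∈ X.ρ.invariants, ∃ n, IsKilledByPow w n X x

lemma IsLocallyNilpotent.of_isShiftOf {w : W} (h : IsLocallyNilpotent w Y) (hXY : IsShiftOf X Y) :
    IsLocallyNilpotent w X := fun Z hZ => h Z (hZ.trans hXY)

lemma isKilledByPow_of_isTateTrivial {j : ℕ} {w : shiftPow k G j}
    (hw : w ∈ (shiftPow k G j).ρ.invariants) (n : ℕ) : ∀ {X : Rep.{u} k G} {m : ℕ},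
    (X ≅ Y ⊗ shiftPow k G m) → IsTateTrivial (Y ⊗ shiftPow k G (m + n * j)) →
      ∀ x ∈ X.ρ.invariants, IsKilledByPow w n X x := by
  induction n with
  | zero =>
    intro X m e hY x hx
    rw [Nat.zero_mul, add_zero] at hY
    exact hY.of_iso e.symm hx
  | succ n ih =>
    intro X m e hY x hx
    refine ih (m := m + j)
      (whiskerRightIso e _ ≪≫ α_ _ _ _ ≪≫ whiskerLeftIso _ (shiftPowAdd k G m j))
      ?_ _ (tmul_mem_invariants hx hw)
    rwa [add_assoc, add_comm j, ← Nat.succ_mul]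

lemma isLocallyNilpotent_of_isTateTrivial {j : ℕ} {w : shiftPow k G j}
    (hw : w ∈ (shiftPow k G j).ρ.invariants)
    (hY : ∀ m, ∃ n, IsTateTrivial (Y ⊗ shiftPow k G (m + n * j))) : IsLocallyNilpotent w Y := by
  rintro X ⟨m, ⟨e⟩⟩ x hx
  obtain ⟨n, hn⟩ := hY m
  exact ⟨n, isKilledByPow_of_isTateTrivial hw n e hn x hx⟩

lemma IsShortExact.exists_isKilledByPow {j : ℕ} {w : shiftPow k G j}
    (hw : w ∈ (shiftPow k G j).ρ.invariants) (n : ℕ) : ∀ {A B C : Rep.{u} k G} {i : A ⟶ B}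
    {p : B ⟶ C}, IsShortExact i p → IsLocallyNilpotent w A → ∀ b ∈ B.ρ.invariants,
      IsKilledByPow w n C (p.hom b) → ∃ m, IsKilledByPow w m B b := by
  induction n with
  | zero =>
    intro A B C i p h hA b hb hpb
    obtain ⟨a, ha, hba⟩ := h.exists_invariant_sub_mem_norms hb hpb
    obtain ⟨m, hm⟩ := hA A (.refl A) a ha
    exact ⟨m, by simpa using (IsKilledByPow.of_mem_norms hw m hba).add (hm.map i)⟩
  | succ n ih =>
    intro A B C i p h hA b hb hpb
    obtain ⟨m, hm⟩ := ih (h.whiskerRight (shiftPow k G j))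
      (hA.of_isShiftOf (isShiftOf_tensor_shiftPow A j)) _ (tmul_mem_invariants hb hw) hpb
    exact ⟨m + 1, hm⟩

variable {j : ℕ} {v : shiftPow k G (j + 1)} (hv : v ∈ (shiftPow k G (j + 1)).ρ.invariants)

lemma IsLocallyNilpotent.tensor_classExtension {i : ℕ} {w : shiftPow k G i}
    (hw : w ∈ (shiftPow k G i).ρ.invariants) (hY : IsLocallyNilpotent w Y) :
    IsLocallyNilpotent w (Y ⊗ classExtension (B := shiftPow k G j) hv) := by
  rintro X ⟨m, ⟨e⟩⟩ x hx
  have hE := ((classExtension.isShortExact (B := shiftPow k G j) hv).whiskerLeft Y).whiskerRight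
    (shiftPow k G m)
  have hx' := map_mem_invariants e.hom hx
  have hunit := ((IsShiftOf.refl Y).of_iso (ρ_ Y)).tensor_shiftPow m
  obtain ⟨n, hn⟩ := hY _ hunit _ (map_mem_invariants ((Y ◁ _) ▷ _) hx')
  obtain ⟨n', hn'⟩ := hE.exists_isKilledByPow hw n
    (hY.of_isShiftOf ((isShiftOf_tensor_shiftPow Y j).tensor_shiftPow m)) _ hx' hn
  exact ⟨n', by simpa using hn'.map e.inv⟩

lemma IsKilledByPow.mem_norms
    (hY : ∀ X, IsShiftOf X Y → IsTateTrivial (X ⊗ classExtension (B := shiftPow k G j) hv)) :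
    ∀ {n : ℕ} {X : Rep.{u} k G}, IsShiftOf X Y → ∀ x ∈ X.ρ.invariants,
      IsKilledByPow v n X x → x ∈ norms X
  | 0, _, _, _, _, hx => hx
  | _ + 1, X, hX, _, hx, hxn =>
    classExtension.mem_norms_of_tmul (B := shiftPow k G j) hv (hY X hX) hx
      (mem_norms hY (hX.tensor_shiftPow (j + 1)) _ (tmul_mem_invariants hx hv) hxn)

variable [CharP k 2]

/-- Tensoring `Y` with the extensions classified by the `w i` makes their squares vanish, without
leaving the modules on which they are locally nilpotent. -/
theorem isTateTrivial_of_isLocallyNilpotent {w : ∀ n, shiftPow k G n}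
    (hw : ∀ n, w n ∈ (shiftPow k G n).ρ.invariants) {N : ℕ}
    (hT : ∀ X : Rep.{u} k G, (∀ i < N, IsSquareNull (hw (i + 1)) X) → IsTateTrivial X)
    (hY : ∀ i < N, IsLocallyNilpotent (w (i + 1)) Y) (hXY : IsShiftOf X Y) : IsTateTrivial X := by
  suffices h : ∀ M ≤ N, ∀ Y : Rep.{u} k G, (∀ i < M, IsLocallyNilpotent (w (i + 1)) Y) →
      (∀ i, M ≤ i → i < N → IsSquareNull (hw (i + 1)) Y) → ∀ X, IsShiftOf X Y → IsTateTrivial X from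
    h N le_rfl Y hY (fun i hNi hi => absurd hi hNi.not_gt) X hXY
  intro M
  induction M with
  | zero =>
    rintro - Y - hY X ⟨m, ⟨e⟩⟩
    exact hT X fun i hi => ((hY i i.zero_le hi).tensor_right _).of_iso e.symm
  | succ M ih =>
    intro hM Y hY hsq X hXY x hx
    let D := classExtension (B := shiftPow k G M) (hw (M + 1))
    have hD : ∀ Z, IsShiftOf Z (Y ⊗ D) → IsTateTrivial Z := by
      refine ih (M.le_succ.trans hM) (Y ⊗ D) (fun i hi => ?_) fun i hMi hi => ?_
      · exact (hY i (hi.trans M.lt_succ_self)).tensor_classExtension _ (hw (i + 1))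
      · obtain rfl | hMi := hMi.eq_or_lt
        · exact IsSquareNull.tensor_left (classExtension.isNull_tmulRight_tmulRight
            (B := shiftPow k G M) (hw (M + 1)) (isStablySymmetric_shiftPow M)) Y
        · exact (hsq i hMi hi).tensor_right D
    obtain ⟨n, hn⟩ := hY M M.lt_succ_self X hXY x hx
    exact IsKilledByPow.mem_norms (hw (M + 1)) (fun Z hZ => hD _ (hZ.tensor_right D)) hXY x hx hn

end Nilpotent

section HalfInvariant

variable {k : Type u} {H : Type} [Field k] [Group H] {F Q X : Rep.{u} k H}

/-- `t` is fixed by `L` and translated by `e` by the elements outside `L`. -/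
structure IsHalfInvariant (L : Subgroup H) (e t : F) : Prop where
  apply_of_mem : ∀ h ∈ L, F.ρ h t = t
  apply_of_notMem : ∀ h ∉ L, F.ρ h t = t + e

variable {L : Subgroup H} {e t : F}

lemma IsHalfInvariant.map_mem_invariants (ht : IsHalfInvariant L e t) (p : F ⟶ Q)
    (hp : p.hom e = 0) : p.hom t ∈ Q.ρ.invariants := fun h => by
  rw [← Rep.hom_comm_apply]
  by_cases hh : h ∈ L
  · rw [ht.apply_of_mem h hh]
  · rw [ht.apply_of_notMem h hh, map_add, hp, add_zero]

lemma IsHalfInvariant.tmul (ht : IsHalfInvariant L e t) {x : X} (hx : x ∈ X.ρ.invariants) :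
    IsHalfInvariant (F := X ⊗ F) L (x ⊗ₜ[k] e) (x ⊗ₜ[k] t) where
  apply_of_mem h hh := by
    change X.ρ h x ⊗ₜ[k] F.ρ h t = _
    rw [hx, ht.apply_of_mem h hh]
  apply_of_notMem h hh := by
    change X.ρ h x ⊗ₜ[k] F.ρ h t = _
    rw [hx, ht.apply_of_notMem h hh, TensorProduct.tmul_add]

lemma IsHalfInvariant.add_mem_invariants [CharP k 2] {t' : F} (ht : IsHalfInvariant L e t)
    (ht' : IsHalfInvariant L e t') : t + t' ∈ F.ρ.invariants := fun h => by
  by_cases hh : h ∈ L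
  · rw [map_add, ht.apply_of_mem h hh, ht'.apply_of_mem h hh]
  · rw [map_add, ht.apply_of_notMem h hh, ht'.apply_of_notMem h hh, add_add_add_comm,
      add_self_eq_zero_of_charTwo (k := k), add_zero]

lemma exists_notMem_of_index_two (hL : L.index = 2) : ∃ s, s ∉ L := by
  by_contra! h
  simp [(Subgroup.eq_top_iff' L).2 h] at hL

lemma exists_isHalfInvariant [CharP k 2] (hL : L.index = 2) (ht : ∀ h ∈ L, F.ρ h t = t) :
    ∃ e ∈ F.ρ.invariants, IsHalfInvariant L e t := by
  obtain ⟨s, hs⟩ := exists_notMem_of_index_two hL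
  have hmul {h g : H} : h * g ∈ L ↔ (h ∈ L ↔ g ∈ L) := Subgroup.mul_mem_iff_of_index_two hL
  have hout : ∀ h ∉ L, F.ρ h t = F.ρ s t := fun h hh => by
    rw [← mul_inv_cancel_left s h, map_mul, Module.End.mul_apply, ht]
    exact hmul.2 (by simp [hs, hh])
  refine ⟨F.ρ s t - t, fun h => ?_, ht, fun h hh => by rw [hout h hh, add_sub_cancel]⟩
  rw [map_sub, ← Module.End.mul_apply, ← map_mul]
  by_cases hh : h ∈ L
  · rw [hout (h * s) (by simp [hmul, hs, hh]), ht h hh]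
  · rw [ht (h * s) (by simp [hmul, hs, hh]), hout h hh, ← sub_eq_zero, sub_sub_sub_comm,
      ← neg_sub (F.ρ s t), ← neg_add', add_self_eq_zero_of_charTwo (k := k), neg_zero]

lemma sum_eq_sum_subgroup_of_index_two [Fintype H] (hL : L.index = 2) [Fintype L] {s : H}
    (hs : s ∉ L) {V : Type*} [AddCommMonoid V] (f : H → V) :
    ∑ h, f h = ∑ l : L, (f l + f (s * l)) := by
  classical
  have hmul (h : H) : s * h ∈ L ↔ h ∉ L := by
    rw [Subgroup.mul_mem_iff_of_index_two hL]
    simp only [hs, false_iff]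
  rw [Finset.sum_add_distrib, ← Fintype.sum_subtype_add_sum_subtype (· ∈ L)]
  congr 1
  · exact Finset.sum_congr (by ext; simp) fun _ _ => rfl
  · refine (Fintype.sum_equiv ((Equiv.mulLeft s).subtypeEquiv fun h => ?_)
      (fun l : L => f (s * l)) _ fun l => rfl).symm
    rw [Equiv.coe_mulLeft, hmul, not_not]

variable [Fintype H]

lemma norm_eq_of_index_two (hL : L.index = 2) [Fintype L] {s : H} (hs : s ∉ L) (v : X) :
    X.ρ.norm v = (Rep.res L.subtype X).ρ.norm v + X.ρ s ((Rep.res L.subtype X).ρ.norm v) := by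
  change _ = (∑ l : L, X.ρ l) v + X.ρ s ((∑ l : L, X.ρ l) v)
  simp only [Representation.norm, LinearMap.sum_apply, sum_eq_sum_subgroup_of_index_two hL hs,
    Finset.sum_add_distrib, map_sum, map_mul, LinearMap.add_apply, Module.End.mul_apply]

lemma isTateTrivial_of_subsingleton [Subsingleton H] (X : Rep.{u} k H) : IsTateTrivial X :=
  fun x _ => ⟨x, by
    rw [Representation.norm, LinearMap.sum_apply, Fintype.sum_subsingleton _ (1 : H)]
    simp⟩

variable [CharP k 2]

/-- The Gysin sequence of an index two subgroup: multiplication by the class of `t` is injective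
on `Ĥ⁰(H, X)` if `Ĥ⁰(L, X)` vanishes. -/
lemma mem_norms_of_tmul_of_index_two (hL : L.index = 2) [Fintype L]
    (hX : IsTateTrivial (Rep.res L.subtype X)) {p : F ⟶ Q} {he : e ∈ F.ρ.invariants}
    (hE : IsShortExact (homOfInvariant he) p) (ht : IsHalfInvariant L e t) {x : X}
    (hx : x ∈ X.ρ.invariants) (hxt : x ⊗ₜ[k] p.hom t ∈ norms (X ⊗ Q)) : x ∈ norms X := by
  have hXE : IsShortExact (tmulRight X he) (X ◁ p) := (hE.whiskerLeft X).iso_comp (ρ_ X).symm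
  obtain ⟨z, hz⟩ := hxt
  obtain ⟨u, rfl⟩ := hXE.surjective z
  obtain ⟨y, hy⟩ := (hXE.exact (x ⊗ₜ[k] t - (X ⊗ F).ρ.norm u)).1 (by
    rw [map_sub, map_norm, hz, sub_eq_zero]
    rfl)
  have hact (h : H) : (tmulRight X he).hom (X.ρ h y - y) = x ⊗ₜ[k] (F.ρ h t - t) := by
    rw [map_sub, Rep.hom_comm_apply, hy, map_sub, norms_le_invariants _ ⟨u, rfl⟩ h,
      sub_sub_sub_cancel_right, TensorProduct.tmul_sub]
    change X.ρ h x ⊗ₜ[k] F.ρ h t - _ = _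
    rw [hx h]
  have hyL : y ∈ (Rep.res L.subtype X).ρ.invariants := fun l => by
    refine sub_eq_zero.1 (hXE.injective ((hact l).trans ?_))
    rw [ht.apply_of_mem l l.2, sub_self, TensorProduct.tmul_zero, map_zero]
  obtain ⟨s, hs⟩ := exists_notMem_of_index_two hL
  have hys : X.ρ s y - y = x := by
    refine hXE.injective ((hact s).trans ?_)
    rw [ht.apply_of_notMem s hs, add_sub_cancel_left, tmulRight_apply]
  obtain ⟨v, hv⟩ := hX hyL
  refine ⟨v, ?_⟩
  rw [norm_eq_of_index_two hL hs, hv, ← sub_add_cancel (X.ρ s y) y, hys, add_left_comm,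
    add_self_eq_zero_of_charTwo (k := k), add_zero]

lemma exists_add_tmul_mem_norms_of_index_two (hL : L.index = 2) [Fintype L]
    (hF : IsTateTrivial (X ⊗ F)) {p : F ⟶ Q} {he : e ∈ F.ρ.invariants}
    (hE : IsShortExact (homOfInvariant he) p) (ht : IsHalfInvariant L e t)
    {x : X ⊗[k] Q} (hx : x ∈ (X ⊗ Q).ρ.invariants)
    (hxL : x ∈ norms (Rep.res L.subtype (X ⊗ Q))) :
    ∃ c ∈ X.ρ.invariants, x + c ⊗ₜ[k] p.hom t ∈ norms (X ⊗ Q) := by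
  have hXE : IsShortExact (tmulRight X he) (X ◁ p) := (hE.whiskerLeft X).iso_comp (ρ_ X).symm
  obtain ⟨v, rfl⟩ := hxL
  obtain ⟨v, rfl⟩ := hXE.surjective v
  obtain ⟨u, hu, hv⟩ := exists_isHalfInvariant (F := X ⊗ F) hL
    fun h hh => norms_le_invariants (Rep.res L.subtype (X ⊗ F)) ⟨v, rfl⟩ ⟨h, hh⟩
  have hpv := map_norm (Rep.resMap L.subtype (X ◁ p)) v
  obtain ⟨c, rfl⟩ := (hXE.exact u).1 <| by
    obtain ⟨s, hs⟩ := exists_notMem_of_index_two hL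
    rw [← sub_eq_of_eq_add' (hv.apply_of_notMem s hs), map_sub, Rep.hom_comm_apply, sub_eq_zero]
    exact hpv ▸ hx s
  have hc := mem_invariants_of_map hXE.injective hu
  rw [tmulRight_apply] at hv
  refine ⟨c, hc, ?_⟩
  have h := map_mem_norms (X ◁ p) (hF (hv.add_mem_invariants (ht.tmul hc)))
  rw [map_add] at h
  exact hpv ▸ h

end HalfInvariant

section SquareNullFamily

variable {k : Type u} {H : Type} [Field k] [Group H] [Fintype H] {A : ℕ → Rep.{u} k H}
  {w : ∀ i, A i} (hw : ∀ i, w i ∈ (A i).ρ.invariants)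

/-- Descending induction on `j`: if `x` is killed by `w i` for all `i < j`, then `x ⊗ w j` is killed
by `w i` for all `i ≤ j`. -/
lemma isTateTrivial_of_isSquareNull {N : ℕ}
    (h : ∀ X, (∀ i < N, IsSquareNull (hw i) X) → ∀ x ∈ X.ρ.invariants,
      (∀ i < N, x ⊗ₜ[k] w i ∈ norms (X ⊗ A i)) → x ∈ norms X) {X : Rep.{u} k H}
    (hX : ∀ i < N, IsSquareNull (hw i) X) : IsTateTrivial X := by
  suffices hj : ∀ j ≤ N, ∀ X, (∀ i < N, IsSquareNull (hw i) X) → ∀ x ∈ X.ρ.invariants,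
      (∀ i < j, x ⊗ₜ[k] w i ∈ norms (X ⊗ A i)) → x ∈ norms X from
    fun x hx => hj 0 N.zero_le X hX x hx fun i hi => absurd hi i.not_lt_zero
  intro j hj
  induction hj using Nat.decreasingInduction with
  | self => exact h
  | of_succ j hj ih =>
    intro X hX x hx hxw
    refine ih X hX x hx fun i hi => ?_
    obtain hi | rfl := (Nat.lt_succ_iff_lt_or_eq.1 hi)
    · exact hxw i hi
    refine ih (X ⊗ A i) (fun l hl => (hX l hl).tensor_right (A i)) _
      (tmul_mem_invariants hx (hw i)) fun l hl => ?_
    obtain hl | rfl := (Nat.lt_succ_iff_lt_or_eq.1 hl)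
    · exact map_mem_norms ((α_ _ _ _).hom ≫ _ ◁ (β_ _ _).hom ≫ (α_ _ _ _).inv)
        (tmul_mem_norms (hxw l hl) (hw i))
    · have hnull := (hX l hj).map_mem_norms hx
      rwa [Rep.comp_apply, tmulRight_apply, tmulRight_apply] at hnull

end SquareNullFamily

section Horner

variable {k : Type u} {G H : Type} [Field k] [Group G] [Group H] {θ : H →* G}
  {w : ∀ n, shiftPow k G n} {q : shift k G}

/-- The value `w n + w (n - 1) ⊗ q + ⋯ + w 0 ⊗ q ⊗ ⋯ ⊗ q` at `q` of the polynomial with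
coefficients `w`, computed by Horner's rule. -/
noncomputable def horner (w : ∀ n, shiftPow k G n) (q : shift k G) : ∀ n, shiftPow k G n
  | 0 => w 0
  | n + 1 =>
    let a : shiftPow k G (n + 1) := horner w q n ⊗ₜ[k] q
    a + w (n + 1)

lemma horner_mem_invariants (hw : ∀ n, w n ∈ (shiftPow k G n).ρ.invariants)
    (hq : q ∈ (Rep.res θ (shift k G)).ρ.invariants) :
    ∀ n, horner w q n ∈ (Rep.res θ (shiftPow k G n)).ρ.invariants
  | 0 => fun h => hw 0 (θ h)
  | n + 1 => Submodule.add_mem _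
    (tmul_mem_invariants (X := Rep.res θ (shiftPow k G n)) (Y := Rep.res θ (shift k G))
      (horner_mem_invariants hw hq n) hq) fun h => hw (n + 1) (θ h)

variable [Fintype H] [CharP k 2] {L : Subgroup H} [Fintype L] {t : G → k} {X : Rep.{u} k H}

lemma mem_norms_of_tmul_horner (hw : ∀ n, w n ∈ (shiftPow k G n).ρ.invariants)
    (hw₀ : w 0 = (1 : k)) (hL : L.index = 2)
    (ht : IsHalfInvariant (F := Rep.res θ (coregular k G)) L (1 : G → k) t)
    (hX : ∀ n, IsTateTrivial (Rep.res L.subtype (X ⊗ Rep.res θ (shiftPow k G n))))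
    {x : X} (hx : x ∈ X.ρ.invariants) : ∀ n,
      (∀ i < n, x ⊗ₜ[k] w (i + 1) ∈ norms (X ⊗ Rep.res θ (shiftPow k G (i + 1)))) →
      x ⊗ₜ[k] horner w ((toShift k G).hom t) n ∈ norms (X ⊗ Rep.res θ (shiftPow k G n)) →
      x ∈ norms X
  | 0, _, h => by
    have h' := map_mem_norms (ρ_ X).hom h
    change TensorProduct.rid k X (x ⊗ₜ[k] w 0) ∈ norms X at h'
    rwa [hw₀, TensorProduct.rid_tmul, one_smul] at h'
  | n + 1, hxw, h => by
    refine mem_norms_of_tmul_horner hw hw₀ hL ht hX hx n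
      (fun i hi => hxw i (hi.trans n.lt_succ_self)) ?_
    have hE : IsShortExact (homOfInvariant (X := Rep.res θ (coregular k G)) fun _ => rfl)
        (Rep.resMap θ (toShift k G)) := (isShortExact_constants_toShift k G).res θ
    have hq := ht.map_mem_invariants (Rep.resMap θ (toShift k G)) (toShift_one k G)
    refine mem_norms_of_tmul_of_index_two hL (hX n) hE ht
      (tmul_mem_invariants hx (horner_mem_invariants hw hq n)) ?_
    refine map_mem_norms (α_ X (Rep.res θ (shiftPow k G n)) (Rep.res θ (shift k G))).inv
      (x := x ⊗ₜ[k] (horner w ((toShift k G).hom t) n ⊗ₜ[k] (toShift k G).hom t)) ?_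
    refine (Submodule.add_mem_iff_left _ (hxw n n.lt_succ_self)).1 ?_
    convert h using 1
    exact (TensorProduct.tmul_add _ _ _).symm

variable (w) in
/-- On every nontrivial `2`-subgroup, the polynomial of degree `N` with coefficients `w` has a root
in degree one which is the class of a homomorphism onto a group of order two. -/
def HasHornerRelation (N : ℕ) : Prop :=
  ∀ (H : Type) [Group H] [Fintype H] (θ : H →* G), Function.Injective θ → IsPGroup 2 H →
    Nontrivial H → ∃ L : Subgroup H, L.index = 2 ∧ ∃ t : G → k,
      IsHalfInvariant (F := Rep.res θ (coregular k G)) L (1 : G → k) t ∧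
      horner w ((toShift k G).hom t) N ∈ norms (Rep.res θ (shiftPow k G N))

variable [Fintype G] {N : ℕ} (hw : ∀ n, w n ∈ (shiftPow k G n).ρ.invariants) (hw₀ : w 0 = (1 : k))
  (hwN : w (N + 1) ∈ norms (shiftPow k G (N + 1))) (hrel : HasHornerRelation w (N + 1))
include hw₀ hwN hrel

lemma isTateTrivial_of_isPGroup (n : ℕ) :
    ∀ (H : Type) [Group H] [Fintype H] (θ : H →* G), Function.Injective θ → IsPGroup 2 H →
      Nat.card H = n → ∀ X : Rep.{u} k H, (∀ i < N, IsSquareNull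
        (W := Rep.res θ (shiftPow k G (i + 1))) (fun h => hw (i + 1) (θ h)) X) →
      IsTateTrivial X := by
  classical
  induction n using Nat.strong_induction_on with
  | _ n ih =>
  intro H _ _ θ hθ hH hn X hX
  obtain hs | hs := subsingleton_or_nontrivial H
  · exact isTateTrivial_of_subsingleton X
  obtain ⟨L, hL, t, ht, hroot⟩ := hrel H θ hθ hH hs
  have hcard : Nat.card L < n := by
    have h := L.card_mul_index
    rw [hL, hn] at h
    have hpos : 0 < Nat.card L := Nat.card_pos
    lia
  refine isTateTrivial_of_isSquareNull (A := fun i => Rep.res θ (shiftPow k G (i + 1)))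
    (w := fun i => w (i + 1)) (fun i h => hw (i + 1) (θ h)) (fun X hX x hx hxw => ?_) hX
  refine mem_norms_of_tmul_horner hw hw₀ hL ht (fun m => ?_) hx (N + 1) (fun i hi => ?_)
    (tmul_mem_norms_of_right hx hroot)
  · exact ih _ hcard L (θ.comp L.subtype) (hθ.comp L.subtype_injective) (hH.to_subgroup L) rfl _
      fun i hi => ((hX i hi).tensor_right _).res L.subtype_injective
  · obtain hi | rfl := Nat.lt_succ_iff_lt_or_eq.1 hi
    · exact hxw i hi
    · exact tmul_mem_norms_of_right hx (res_mem_norms hθ hwN)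

theorem isTateTrivial_of_hasHornerRelation {X : Rep.{u} k G}
    (hX : ∀ i < N, IsSquareNull (hw (i + 1)) X) : IsTateTrivial X := by
  classical
  have : Fact (Nat.Prime 2) := ⟨Nat.prime_two⟩
  obtain ⟨P⟩ : Nonempty (Sylow 2 G) := inferInstance
  have hP := P.toSubgroup.subtype_injective
  refine isTateTrivial_of_res hP ?_ (isTateTrivial_of_isPGroup hw hw₀ hwN hrel _ P
    P.toSubgroup.subtype hP P.isPGroup' rfl _ fun i hi => (hX i hi).res hP)
  rw [Subgroup.range_subtype, Ne, CharP.cast_eq_zero_iff k 2]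
  exact P.not_dvd_index

end Horner

section Pullback

variable (k : Type u) {G G' G'' H : Type} [Field k] [Group G] [Group G'] [Group G''] [Group H]

/-- The map on the cokernels of the constants induced by pulling functions back along `σ`. -/
noncomputable def shiftMap (σ : G' → G) : shift k G →ₗ[k] shift k G' :=
  Submodule.mapQ _ _ (LinearMap.funLeft k k σ) <|
    (Submodule.span_singleton_le_iff_mem _ _).2 <| Submodule.mem_span_singleton_self (1 : G' → k)

/-- The `n`-fold tensor power of `shiftMap`. -/
noncomputable def shiftPowMap (σ : G' → G) : ∀ n, shiftPow k G n →ₗ[k] shiftPow k G' n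
  | 0 => (LinearMap.id : k →ₗ[k] k)
  | n + 1 => TensorProduct.map (shiftPowMap σ n) (shiftMap k σ)

variable {k}

lemma shiftMap_toShift (σ : G' → G) (f : G → k) :
    shiftMap k σ ((toShift k G).hom f) = (toShift k G').hom (f ∘ σ) := rfl

lemma shiftMap_comp (σ : G' → G) (τ : G'' → G') :
    shiftMap k τ ∘ₗ shiftMap k σ = shiftMap k (σ ∘ τ) :=
  Submodule.linearMap_qext _ rfl

lemma shiftPowMap_comp (σ : G' → G) (τ : G'' → G') :
    ∀ n, shiftPowMap k τ n ∘ₗ shiftPowMap k σ n = shiftPowMap k (σ ∘ τ) n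
  | 0 => rfl
  | n + 1 => by
    change TensorProduct.map _ _ ∘ₗ TensorProduct.map _ _ = TensorProduct.map _ _
    rw [← TensorProduct.map_comp, shiftPowMap_comp σ τ n, shiftMap_comp]

lemma shiftPowMap_id : ∀ n, shiftPowMap k (id : G → G) n = LinearMap.id
  | 0 => rfl
  | n + 1 => by
    change TensorProduct.map _ _ = LinearMap.id
    have h : shiftMap k (id : G → G) = LinearMap.id := Submodule.linearMap_qext _ rfl
    rw [shiftPowMap_id n, h]
    exact TensorProduct.map_id

lemma shiftPowMap_horner (σ : G' → G) (w : ∀ n, shiftPow k G n) (q : shift k G) : ∀ n,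
    shiftPowMap k σ n (horner w q n) = horner (fun i => shiftPowMap k σ i (w i)) (shiftMap k σ q) n
  | 0 => rfl
  | n + 1 => by
    have h := map_add (shiftPowMap k σ (n + 1)) (horner w q n ⊗ₜ[k] q) (w (n + 1))
    rw [horner, horner, ← shiftPowMap_horner σ w q n]
    exact h

variable {σ : G' → G} {θ : H →* G} {φ : H →* G'} (hσ : ∀ h x, σ (φ h * x) = θ h * σ x)

include hσ

lemma shiftMap_ρ (h : H) (q : shift k G) :
    shiftMap k σ ((shift k G).ρ (θ h) q) = (shift k G').ρ (φ h) (shiftMap k σ q) := by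
  obtain ⟨f, rfl⟩ := toShift_surjective k G q
  rw [← Rep.hom_comm_apply, shiftMap_toShift, shiftMap_toShift, ← Rep.hom_comm_apply]
  congr 1
  funext x
  change f ((θ h)⁻¹ * σ x) = f (σ ((φ h)⁻¹ * x))
  rw [← map_inv, ← map_inv, hσ]

lemma shiftPowMap_comp_ρ (h : H) : ∀ n,
    shiftPowMap k σ n ∘ₗ (shiftPow k G n).ρ (θ h) = (shiftPow k G' n).ρ (φ h) ∘ₗ shiftPowMap k σ n
  | 0 => rfl
  | n + 1 => TensorProduct.ext' fun a q =>
    congr($(LinearMap.congr_fun (shiftPowMap_comp_ρ h n) a) ⊗ₜ[k] $(shiftMap_ρ hσ h q))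

omit hσ

variable (k) in
/-- `shiftMap` as a morphism of representations. -/
noncomputable def shiftHom : Rep.res θ (shift k G) ⟶ Rep.res φ (shift k G') :=
  Rep.ofHom ⟨shiftMap k σ, fun h => LinearMap.ext (shiftMap_ρ hσ h)⟩

variable (k) in
/-- `shiftPowMap` as a morphism of representations. -/
noncomputable def shiftPowHom (n : ℕ) :
    Rep.res θ (shiftPow k G n) ⟶ Rep.res φ (shiftPow k G' n) :=
  Rep.ofHom ⟨shiftPowMap k σ n, fun h => shiftPowMap_comp_ρ hσ h n⟩

include hσ

lemma shiftPowMap_mem_invariants {n : ℕ} {x : shiftPow k G n}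
    (hx : x ∈ (Rep.res θ (shiftPow k G n)).ρ.invariants) :
    shiftPowMap k σ n x ∈ (Rep.res φ (shiftPow k G' n)).ρ.invariants :=
  map_mem_invariants (shiftPowHom k hσ n) hx

variable [Fintype H]

lemma shiftPowMap_mem_norms {n : ℕ} {x : shiftPow k G n}
    (hx : x ∈ norms (Rep.res θ (shiftPow k G n))) :
    shiftPowMap k σ n x ∈ norms (Rep.res φ (shiftPow k G' n)) :=
  map_mem_norms (shiftPowHom k hσ n) hx

omit hσ
variable [Finite G]

lemma isNull_of_factors_res_coregular (hθ : Function.Injective θ) {X Y : Rep.{u} k H}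
    (f : X ⟶ Rep.res θ (coregular k G)) (f' : Rep.res θ (coregular k G) ⟶ Y) :
    IsNull (f ≫ f') := by
  have := Fintype.ofFinite G
  have h := (((isNull_id_coregular k G).res hθ).precomp f).comp f'
  rwa [show Rep.resMap θ (𝟙 (coregular k G)) = 𝟙 _ from rfl, Category.comp_id] at h

/-- An equivariant self-map of `G` induces the identity in the stable category, since `f - f ∘ σ`
is well defined for `f` modulo constants. -/
lemma isNull_id_sub_shiftHom (hθ : Function.Injective θ) {σ : G → G}
    (hσ : ∀ h x, σ (θ h * x) = θ h * σ x) :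
    IsNull (𝟙 (Rep.res θ (shift k G)) - shiftHom k hσ) := by
  let d : shift k G →ₗ[k] (G → k) :=
    Submodule.liftQ _ (LinearMap.id - LinearMap.funLeft k k σ) <|
      (Submodule.span_singleton_le_iff_mem _ _).2 <| LinearMap.mem_ker.2 <| sub_self (1 : G → k)
  let D : Rep.res θ (shift k G) ⟶ Rep.res θ (coregular k G) :=
    Rep.ofHom ⟨d, fun h => Submodule.linearMap_qext _ <| LinearMap.ext fun f => funext fun x => by
      change f ((θ h)⁻¹ * x) - f ((θ h)⁻¹ * σ x) = f ((θ h)⁻¹ * x) - f (σ ((θ h)⁻¹ * x))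
      rw [← map_inv, hσ]⟩
  have hD : 𝟙 _ - shiftHom k hσ = D ≫ Rep.resMap θ (toShift k G) := by
    ext : 2
    exact Submodule.linearMap_qext _ rfl
  rw [hD]
  exact isNull_of_factors_res_coregular hθ D _

lemma isNull_id_sub_shiftPowHom (hθ : Function.Injective θ) {σ : G → G}
    (hσ : ∀ h x, σ (θ h * x) = θ h * σ x) : ∀ n,
    IsNull (𝟙 (Rep.res θ (shiftPow k G n)) - shiftPowHom k hσ n)
  | 0 => by
    rw [show shiftPowHom k hσ 0 = 𝟙 _ from rfl, sub_self]
    exact IsNull.zero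
  | n + 1 => by
    have h₁ := (isNull_id_sub_shiftPowHom hθ hσ n).whiskerRight (Rep.res θ (shift k G))
    have h₂ := ((isNull_id_sub_shiftHom (k := k) hθ hσ).whiskerLeft _).precomp
      (shiftPowHom k hσ n ▷ Rep.res θ (shift k G))
    let f : Rep.res θ (shiftPow k G n) ⊗ Rep.res θ (shift k G) ⟶
      Rep.res θ (shiftPow k G n) ⊗ Rep.res θ (shift k G) := shiftPowHom k hσ (n + 1)
    have hf : 𝟙 _ - f =
        (𝟙 _ - shiftPowHom k hσ n) ▷ _ + shiftPowHom k hσ n ▷ _ ≫ _ ◁ (𝟙 _ - shiftHom k hσ) := by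
      ext : 2
      refine TensorProduct.ext' fun a q => ?_
      change a ⊗ₜ[k] q - shiftPowMap k σ n a ⊗ₜ[k] shiftMap k σ q =
        (a - shiftPowMap k σ n a) ⊗ₜ[k] q + shiftPowMap k σ n a ⊗ₜ[k] (q - shiftMap k σ q)
      rw [TensorProduct.sub_tmul, TensorProduct.tmul_sub, sub_add_sub_cancel]
    have h : IsNull (𝟙 _ - f) := hf ▸ h₁.add h₂
    exact h

omit [Finite G] in
lemma isNull_shiftHom_of_trivial [Finite G'] (hφ : Function.Injective φ)
    (hσ : ∀ h x, σ (φ h * x) = (1 : H →* G) h * σ x) : IsNull (shiftHom k hσ) := by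
  obtain ⟨s, hs⟩ := (toShift k G).hom.toLinearMap.exists_rightInverse_of_surjective
    (LinearMap.range_eq_top.2 (toShift_surjective k G))
  let S : Rep.res (1 : H →* G) (shift k G) ⟶ Rep.res φ (coregular k G') :=
    Rep.ofHom ⟨LinearMap.funLeft k k σ ∘ₗ s, fun h => LinearMap.ext fun q => funext fun x => by
      change s ((shift k G).ρ 1 q) (σ x) = s q (σ ((φ h)⁻¹ * x))
      rw [map_one, Module.End.one_apply, ← map_inv, hσ, MonoidHom.one_apply, one_mul]⟩
  have hS : shiftHom k hσ = S ≫ Rep.resMap φ (toShift k G') := by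
    ext : 2
    exact LinearMap.ext fun q => congr(shiftMap k σ $(LinearMap.congr_fun hs.symm q))
  rw [hS]
  exact isNull_of_factors_res_coregular hφ S _

omit [Finite G] in
lemma shiftPowMap_succ_mem_norms_of_trivial [Finite G'] (hφ : Function.Injective φ)
    (hσ : ∀ h x, σ (φ h * x) = (1 : H →* G) h * σ x) (n : ℕ) (a : shiftPow k G (n + 1)) :
    shiftPowMap k σ (n + 1) a ∈ norms (Rep.res φ (shiftPow k G' (n + 1))) := by
  have h := ((isNull_shiftHom_of_trivial (k := k) hφ hσ).whiskerLeft
    (Rep.res φ (shiftPow k G' n))).precomp (shiftPowHom k hσ n ▷ Rep.res 1 (shift k G))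
  have heq : shiftPowMap k σ (n + 1) =
      (shiftPowHom k hσ n ▷ _ ≫ _ ◁ shiftHom k hσ).hom.toLinearMap :=
    TensorProduct.ext' fun _ _ => rfl
  rw [heq]
  refine h.map_mem_norms (x := a) fun g => ?_
  change (shiftPow k G (n + 1)).ρ 1 a = a
  rw [map_one, Module.End.one_apply]

end Pullback

section HornerExpansion

variable {k : Type u} {G H : Type} [Field k] [Group G] [Group H]

variable (k) in
/-- The isomorphism of the group of signs with the additive group `ℤ/2`, with values in a field of
characteristic two. -/
def signLog (u : SignTypeˣ) : k := if u = 1 then 0 else 1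

lemma signLog_mul [CharP k 2] (u v : SignTypeˣ) :
    signLog k (u * v) = signLog k u + signLog k v := by
  have h : ∀ u : SignTypeˣ, u = 1 ∨ u = -1 := by decide
  obtain rfl | rfl := h u <;> obtain rfl | rfl := h v <;>
    simp [signLog, CharTwo.add_self_eq_zero, show (-1 : SignTypeˣ) ≠ 1 by decide]

lemma signLog_inv (u : SignTypeˣ) : signLog k u⁻¹ = signLog k u := by
  simp only [signLog, inv_eq_one]

lemma isHalfInvariant_signLog [CharP k 2] {θ : H →* G} {χ : H →* SignTypeˣ} {τ : G → SignTypeˣ}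
    (hτ : ∀ h x, τ (θ h * x) = χ h * τ x) :
    IsHalfInvariant (F := Rep.res θ (coregular k G)) χ.ker (1 : G → k) (signLog k ∘ τ) := by
  have hact (h : H) (x : G) :
      signLog k (τ ((θ h)⁻¹ * x)) = signLog k (χ h) + signLog k (τ x) := by
    rw [← map_inv, hτ, signLog_mul, map_inv, signLog_inv]
  refine ⟨fun h hh => funext fun x => (hact h x).trans ?_,
    fun h hh => funext fun x => (hact h x).trans ?_⟩
  · rw [signLog, if_pos (MonoidHom.mem_ker.1 hh), zero_add]
    rfl
  · rw [signLog, if_neg (mt MonoidHom.mem_ker.2 hh), add_comm]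
    rfl

variable (k G) in
/-- The class in degree one of the projection of `G × {±1}` onto its second factor. -/
noncomputable def signClass : shift k (G × SignTypeˣ) :=
  (toShift k (G × SignTypeˣ)).hom (signLog k ∘ Prod.snd)

lemma signClass_mem_invariants [CharP k 2] :
    signClass k G ∈ (shift k (G × SignTypeˣ)).ρ.invariants :=
  (isHalfInvariant_signLog (θ := MonoidHom.id (G × SignTypeˣ)) (χ := MonoidHom.snd G _)
    fun _ _ => rfl).map_mem_invariants (toShift k _) (toShift_one k _)

/-- Inflation along the projection `G × {±1} → G`. -/
noncomputable abbrev inflate (n : ℕ) : shiftPow k G n →ₗ[k] shiftPow k (G × SignTypeˣ) n :=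
  shiftPowMap k Prod.fst n

/-- Restriction to the factor `G` of `G × {±1}`. -/
noncomputable abbrev restrict (n : ℕ) : shiftPow k (G × SignTypeˣ) n →ₗ[k] shiftPow k G n :=
  shiftPowMap k (fun g => (g, 1)) n

lemma inflate_mem_invariants {n : ℕ} {a : shiftPow k G n} (ha : a ∈ (shiftPow k G n).ρ.invariants) :
    inflate n a ∈ (shiftPow k (G × SignTypeˣ) n).ρ.invariants :=
  shiftPowMap_mem_invariants (φ := MonoidHom.id (G × SignTypeˣ)) (θ := MonoidHom.fst G SignTypeˣ)
    (fun _ _ => rfl) fun h => ha h.1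

lemma restrict_mem_invariants {n : ℕ} {a : shiftPow k (G × SignTypeˣ) n}
    (ha : a ∈ (shiftPow k (G × SignTypeˣ) n).ρ.invariants) :
    restrict n a ∈ (shiftPow k G n).ρ.invariants :=
  shiftPowMap_mem_invariants (φ := MonoidHom.id G) (θ := MonoidHom.inl G SignTypeˣ)
    (fun _ _ => by simp) fun h => ha (h, 1)

lemma horner_congr {w w' : ∀ n, shiftPow k G n} (q : shift k G) :
    ∀ n, (∀ i ≤ n, w i = w' i) → horner w q n = horner w' q n
  | 0, h => h 0 le_rfl
  | n + 1, h => by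
    rw [horner, horner, horner_congr q n fun i hi => h i (hi.trans n.le_succ), h _ le_rfl]

lemma sub_inflate_restrict_mem_norms [Finite G] {n : ℕ} {x : shiftPow k (G × SignTypeˣ) n}
    (hx : x ∈ (shiftPow k (G × SignTypeˣ) n).ρ.invariants)
    [Fintype (MonoidHom.snd G SignTypeˣ).ker] :
    x - inflate n (restrict n x) ∈
      norms (Rep.res (MonoidHom.snd G SignTypeˣ).ker.subtype (shiftPow k (G × SignTypeˣ) n)) := by
  have hσ (h : (MonoidHom.snd G SignTypeˣ).ker) (y : G × SignTypeˣ) :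
      (((h : G × SignTypeˣ) * y).1, (1 : SignTypeˣ)) = h * (y.1, (1 : SignTypeˣ)) :=
    Prod.ext rfl ((mul_one _).trans h.2).symm
  rw [show inflate n (restrict n x) = shiftPowMap k (fun y : G × SignTypeˣ => (y.1, 1)) n x from
    LinearMap.congr_fun (shiftPowMap_comp _ _ n) x]
  exact (isNull_id_sub_shiftPowHom (k := k) (Subgroup.subtype_injective _) hσ n).map_mem_norms
    fun h => hx h

lemma index_ker_snd_signType : (MonoidHom.snd G SignTypeˣ).ker.index = 2 := by
  rw [Subgroup.index_ker, MonoidHom.range_eq_top.2 Prod.snd_surjective,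
    Nat.card_congr Subgroup.topEquiv.toEquiv, Nat.card_eq_fintype_card]
  rfl

variable [CharP k 2]

/-- The Künneth formula for `G × {±1}`. -/
theorem exists_sub_horner_mem_norms [Fintype G] : ∀ (n : ℕ) {x : shiftPow k (G × SignTypeˣ) n},
    x ∈ (shiftPow k (G × SignTypeˣ) n).ρ.invariants →
    ∃ w : ∀ i, shiftPow k G i, (∀ i, w i ∈ (shiftPow k G i).ρ.invariants) ∧ w n = restrict n x ∧
      x - horner (fun i => inflate i (w i)) (signClass k G) n ∈ norms (shiftPow k (G × SignTypeˣ) n)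
  | 0, x, _ => by
    refine ⟨fun | 0 => x | _ + 1 => 0, fun | 0 => fun _ => rfl | _ + 1 => zero_mem _, rfl, ?_⟩
    rw [show x - horner _ (signClass k G) 0 = 0 from sub_self _]
    exact zero_mem _
  | n + 1, x, hx => by
    classical
    have hF := isTateTrivial_tensor_coregular (shiftPow k (G × SignTypeˣ) n)
    have ht : IsHalfInvariant (F := coregular k (G × SignTypeˣ)) (MonoidHom.snd G SignTypeˣ).ker
        1 (signLog k ∘ Prod.snd) :=
      isHalfInvariant_signLog (θ := MonoidHom.id _) fun _ _ => rfl
    have hr := restrict_mem_invariants hx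
    obtain ⟨c, hc, hxc⟩ := exists_add_tmul_mem_norms_of_index_two index_ker_snd_signType hF
      (isShortExact_constants_toShift k (G × SignTypeˣ)) ht
      (sub_mem hx (inflate_mem_invariants hr)) (sub_inflate_restrict_mem_norms hx)
    obtain ⟨w, hw, -, hcw⟩ := exists_sub_horner_mem_norms n (neg_mem hc)
    let w' : ∀ i, shiftPow k G i := Function.update w (n + 1) (restrict (n + 1) x)
    have hw' : horner (fun i => inflate i (w' i)) (signClass k G) n =
        horner (fun i => inflate i (w i)) (signClass k G) n :=
      horner_congr _ n fun i hi => by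
        simp only [w', Function.update_of_ne (Nat.lt_succ_of_le hi).ne]
    refine ⟨w', fun i => ?_, Function.update_self .., ?_⟩
    · obtain rfl | hi := eq_or_ne i (n + 1)
      · simpa only [w', Function.update_self] using hr
      · simpa only [w', Function.update_of_ne hi] using hw i
    · have h := add_mem hxc (tmul_mem_norms hcw signClass_mem_invariants)
      rw [horner, hw']
      simp only [w', Function.update_self]
      rw [TensorProduct.sub_tmul, TensorProduct.neg_tmul] at h
      have habel {A : Type u} [AddCommGroup A] (a b c d : A) :
          a - b + c + (-c - d) = a - (d + b) := by abel
      exact (congrArg (· ∈ norms _) (habel (A := shiftPow k (G × SignTypeˣ) (n + 1)) ..)).mp h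

lemma horner_inflate_mem_norms [Finite G] {w : ∀ i, shiftPow k G i} (hw₀ : w 0 = (0 : k)) : ∀ n,
    horner (fun i => inflate i (w i)) (signClass k G) n ∈
      norms (Rep.res (MonoidHom.inr G SignTypeˣ) (shiftPow k (G × SignTypeˣ) n))
  | 0 => by
    have h : horner (fun i => inflate i (w i)) (signClass k G) 0 = 0 := hw₀
    rw [h]
    exact zero_mem _
  | n + 1 => by
    have hq : signClass k G ∈ (Rep.res (MonoidHom.inr G SignTypeˣ) (shift k _)).ρ.invariants :=
      fun h => signClass_mem_invariants (1, h)
    have h₁ := tmul_mem_norms (horner_inflate_mem_norms hw₀ n) hq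
    have h₂ := shiftPowMap_succ_mem_norms_of_trivial (φ := MonoidHom.inr G SignTypeˣ)
      (σ := Prod.fst) (fun _ _ h => (Prod.ext_iff.1 h).2) (fun _ _ => rfl) n (w (n + 1))
    exact add_mem h₁ h₂

omit [CharP k 2] in
/-- Restriction of the Künneth formula to the graph of a character. -/
lemma horner_mem_norms_of_graph [Fintype G] [Fintype H] {θ : H →* G} {χ : H →* SignTypeˣ}
    {τ : G → SignTypeˣ} (hτ : ∀ h x, τ (θ h * x) = χ h * τ x)
    (hθ : Function.Injective (θ.prod χ)) {n : ℕ}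
    {x : shiftPow k (G × SignTypeˣ) n} {w : ∀ i, shiftPow k G i}
    (hxw : x - horner (fun i => inflate i (w i)) (signClass k G) n ∈
      norms (shiftPow k (G × SignTypeˣ) n))
    (hx : x ∈ norms (Rep.res (θ.prod χ) (shiftPow k (G × SignTypeˣ) n))) :
    horner w ((toShift k G).hom (signLog k ∘ τ)) n ∈ norms (Rep.res θ (shiftPow k G n)) := by
  have hσ (h : H) (y : G) : (θ h * y, τ (θ h * y)) = θ.prod χ h * (y, τ y) :=
    Prod.ext rfl (hτ h y)
  have hw := sub_mem hx (res_mem_norms hθ hxw)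
  rw [sub_sub_cancel] at hw
  have h := shiftPowMap_mem_norms (σ := fun y => (y, τ y)) hσ hw
  rw [shiftPowMap_horner] at h
  have hi (i : ℕ) : shiftPowMap k (fun y => (y, τ y)) i (inflate i (w i)) = w i := by
    refine (LinearMap.congr_fun (shiftPowMap_comp _ _ i) (w i)).trans ?_
    exact LinearMap.congr_fun (shiftPowMap_id i) (w i)
  simp only [hi] at h
  exact h

end HornerExpansion

section DimensionShift

variable {k : Type u} {G H : Type} [Field k] [Group G] [Group H] {A : Rep.{u} k G}

/-- A graded piece of a differential representation: submodules `chains s` of `A`, stable under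
the group and such that `δ` maps `chains s` to `chains (s + 1)`. -/
structure GradedSubcomplex (δ : A ⟶ A) where
  /-- The submodule of chains of degree `s`. -/
  chains : ℕ → Submodule k A
  le_comap : ∀ s g, chains s ≤ (chains s).comap (A.ρ g)
  map_mem : ∀ {s x}, x ∈ chains s → δ.hom x ∈ chains (s + 1)
  comp_self : δ ≫ δ = 0

namespace GradedSubcomplex

variable {δ : A ⟶ A} (U : GradedSubcomplex δ)

/-- The representation on the chains of degree `s`. -/
noncomputable abbrev X (s : ℕ) : Rep.{u} k G := Rep.subrepresentation A (U.chains s) (U.le_comap s)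

/-- The representation on the cycles of degree `s`. -/
noncomputable abbrev Z (s : ℕ) : Rep.{u} k G :=
  Rep.subrepresentation A (U.chains s ⊓ δ.hom.toLinearMap.ker) fun g x hx =>
    ⟨U.le_comap s g hx.1, by
      change δ.hom (A.ρ g x) = 0
      rw [Rep.hom_comm_apply, show δ.hom x = 0 from hx.2, map_zero]⟩

/-- The inclusion of the cycles into the chains. -/
noncomputable def ι (s : ℕ) : U.Z s ⟶ U.X s :=
  Rep.ofHom ⟨Submodule.inclusion inf_le_left, fun _ => rfl⟩

/-- The differential, with values in the cycles. -/
noncomputable def d (s : ℕ) : U.X s ⟶ U.Z (s + 1) :=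
  Rep.ofHom ⟨δ.hom.toLinearMap.restrict fun _ hx => ⟨U.map_mem hx, congr(($U.comp_self).hom _)⟩,
    fun g => LinearMap.ext fun x => Subtype.ext (Rep.hom_comm_apply δ g x.1)⟩

/-- Exactness at the chains of degree `s + 1`. -/
def IsExactAt (s : ℕ) : Prop := ∀ x ∈ U.chains (s + 1), δ.hom x = 0 → ∃ y ∈ U.chains s, δ.hom y = x

variable {U}

lemma IsExactAt.isShortExact {s : ℕ} (h : U.IsExactAt s) : IsShortExact (U.ι s) (U.d s) where
  injective := Submodule.inclusion_injective inf_le_left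
  surjective := fun x => by
    obtain ⟨y, hy, hyx⟩ := h x.1 x.2.1 x.2.2
    exact ⟨⟨y, hy⟩, Subtype.ext hyx⟩
  exact := fun x => ⟨fun hx => ⟨⟨x.1, x.2, congr(($hx).1)⟩, rfl⟩, by
    rintro ⟨y, rfl⟩
    exact Subtype.ext y.2.2⟩

/-- The morphism `g` on cycles of degree `s + 1` is obtained from the morphism `f` on cycles of
degree `s` by dimension shifting along the coregular representation. -/
def IsDimensionShift (U : GradedSubcomplex δ) {s : ℕ} (f : U.Z s ⟶ shiftPow k G s)
    (g : U.Z (s + 1) ⟶ shiftPow k G (s + 1)) : Prop :=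
  ∃ b : U.X s ⟶ shiftPow k G s ⊗ coregular k G,
    U.ι s ≫ b = f ≫ tmulRight _ (one_mem_invariants_coregular k G) ∧
      U.d s ≫ g = b ≫ shiftPow k G s ◁ toShift k G

/-- The inclusion of the cycles of a subcomplex over a subgroup. -/
noncomputable def cyclesInclusion {θ : H →* G} (V : GradedSubcomplex (Rep.resMap θ δ))
    (hVU : ∀ s, V.chains s ≤ U.chains s) (s : ℕ) : V.Z s ⟶ Rep.res θ (U.Z s) :=
  Rep.ofHom ⟨Submodule.inclusion (inf_le_inf_right _ (hVU s)), fun _ => rfl⟩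

/-- The inclusion of the chains of a subcomplex over a subgroup. -/
noncomputable def chainsInclusion {θ : H →* G} (V : GradedSubcomplex (Rep.resMap θ δ))
    (hVU : ∀ s, V.chains s ≤ U.chains s) (s : ℕ) : V.X s ⟶ Rep.res θ (U.X s) :=
  Rep.ofHom ⟨Submodule.inclusion (hVU s), fun _ => rfl⟩

variable [Finite G] {s : ℕ}

lemma IsExactAt.exists_isDimensionShift (h : U.IsExactAt s) (f : U.Z s ⟶ shiftPow k G s) :
    ∃ g, U.IsDimensionShift f g := by
  have := Fintype.ofFinite G
  have hnull : IsNull (f ≫ tmulRight _ (one_mem_invariants_coregular k G)) := by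
    rw [← Category.comp_id (tmulRight _ _), ← Category.assoc]
    exact (isNull_id_tensor_coregular _).precomp _
  obtain ⟨b, hb⟩ := hnull.exists_extension h.isShortExact.injective
  obtain ⟨g, hg⟩ := h.isShortExact.exists_desc (f := b ≫ shiftPow k G s ◁ toShift k G) (by
    rw [← Category.assoc, hb]
    ext x
    exact (isShortExact_tmulRight_one _).map_comp_apply _)
  exact ⟨g, b, hb, hg⟩

variable [Fintype H] {θ : H →* G} {f : U.Z s ⟶ shiftPow k G s}
  {g : U.Z (s + 1) ⟶ shiftPow k G (s + 1)}

lemma IsDimensionShift.isNull_succ (hfg : U.IsDimensionShift f g) (hθ : Function.Injective θ)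
    {V : GradedSubcomplex (Rep.resMap θ δ)} (hVU : ∀ s, V.chains s ≤ U.chains s)
    (hV : V.IsExactAt s) (hf : IsNull (cyclesInclusion V hVU s ≫ Rep.resMap θ f)) :
    IsNull (cyclesInclusion V hVU (s + 1) ≫ Rep.resMap θ g) := by
  have := Fintype.ofFinite G
  obtain ⟨b, hb, hbg⟩ := hfg
  refine hV.isShortExact.isNull_right ((isShortExact_tmulRight_one _).res θ)
    (b := chainsInclusion V hVU s ≫ Rep.resMap θ b) ?_ ?_
    ((isNull_id_tensor_coregular _).res hθ) hf
  · ext x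
    exact congr(($hb).hom (Submodule.inclusion (inf_le_inf_right _ (hVU s)) x))
  · ext x
    exact congr(($hbg).hom (Submodule.inclusion (hVU s) x))

omit [Finite G] in
lemma IsDimensionShift.isNull_of_succ (hfg : U.IsDimensionShift f g) (hU : U.IsExactAt s)
    (hX : IsNull (𝟙 (Rep.res θ (U.X s)))) (hg : IsNull (Rep.resMap θ g)) :
    IsNull (Rep.resMap θ f) := by
  obtain ⟨b, hb, hbg⟩ := hfg
  refine (hU.isShortExact.res θ).isNull_left ((isShortExact_tmulRight_one _).res θ)
    (b := Rep.resMap θ b) ?_ ?_ hX hg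
  · ext x
    exact congr(($hb).hom x)
  · ext x
    exact congr(($hbg).hom x)

lemma exists_isDimensionShift (hU : ∀ s, U.IsExactAt s) (f : U.Z 0 ⟶ shiftPow k G 0) :
    ∃ φ : ∀ s, U.Z s ⟶ shiftPow k G s, φ 0 = f ∧ ∀ s, U.IsDimensionShift (φ s) (φ (s + 1)) := by
  choose next hnext using fun s => (hU s).exists_isDimensionShift
  exact ⟨Nat.rec f next, rfl, fun s => hnext s _⟩

variable {φ : ∀ s, U.Z s ⟶ shiftPow k G s} (hφ : ∀ s, U.IsDimensionShift (φ s) (φ (s + 1)))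

include hφ

lemma isNull_cyclesInclusion_comp (hθ : Function.Injective θ)
    {V : GradedSubcomplex (Rep.resMap θ δ)} (hVU : ∀ s, V.chains s ≤ U.chains s)
    (hV : ∀ s, V.IsExactAt s) (h₀ : Subsingleton (V.Z 0)) :
    ∀ s, IsNull (cyclesInclusion V hVU s ≫ Rep.resMap θ (φ s))
  | 0 => by
    rw [show cyclesInclusion V hVU 0 ≫ Rep.resMap θ (φ 0) = 0 by
      ext x
      rw [Subsingleton.elim x 0]
      exact map_zero _]
    exact IsNull.zero
  | s + 1 => (hφ s).isNull_succ hθ hVU (hV s) (isNull_cyclesInclusion_comp hθ hVU hV h₀ s)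

omit [Finite G] in
lemma isNull_res_zero (hU : ∀ s, U.IsExactAt s) :
    ∀ n, (∀ s < n, IsNull (𝟙 (Rep.res θ (U.X s)))) → IsNull (Rep.resMap θ (φ n)) →
      IsNull (Rep.resMap θ (φ 0))
  | 0, _, h => h
  | n + 1, hX, h => isNull_res_zero hU n (fun s hs => hX s (hs.trans n.lt_succ_self))
      ((hφ n).isNull_of_succ (hU n) (hX n n.lt_succ_self) h)

end GradedSubcomplex

end DimensionShift

section CrossPolytope

variable (k : Type u) {ι : Type} [Field k] [DecidableEq ι]

/-- The part of the boundary operator on the cells of the cross-polytope which replaces a nonzero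
sign at `i` by zero. The cells of the cross-polytope with vertices `±i`, for `i : ι`, are the sign
vectors `q : ι → SignType`, the vertices of `q` being the `q i • i` with `q i ≠ 0`; the zero vector
is the empty cell. -/
def boundaryAt (i : ι) : Module.End k ((ι → SignType) → k) where
  toFun c q := if q i = 0 then ∑ ε : SignTypeˣ, c (Function.update q i ε) else 0
  map_add' c c' := by
    ext q
    by_cases h : q i = 0 <;> simp [h, Finset.sum_add_distrib]
  map_smul' a c := by
    ext q
    by_cases h : q i = 0 <;> simp [h, Finset.mul_sum]

/-- The cone with apex the vertex `ε • i`. -/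
def coneAt (i : ι) (ε : SignTypeˣ) : Module.End k ((ι → SignType) → k) where
  toFun c q := if q i = ε then c (Function.update q i 0) else 0
  map_add' c c' := by
    ext q
    by_cases h : q i = ε <;> simp [h]
  map_smul' a c := by
    ext q
    by_cases h : q i = ε <;> simp [h]

/-- The map induced by sending the vertices `± i` to `ε • i`. -/
def flattenAt (i : ι) (ε : SignTypeˣ) : Module.End k ((ι → SignType) → k) where
  toFun c q := if q i = 0 then 0 else c (Function.update q i (-ε : SignTypeˣ))
  map_add' c c' := by
    ext q
    by_cases h : q i = 0 <;> simp [h]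
  map_smul' a c := by
    ext q
    by_cases h : q i = 0 <;> simp [h]

/-- The boundary operator of the augmented chain complex of the cross-polytope. -/
def boundary [Fintype ι] : Module.End k ((ι → SignType) → k) := ∑ i, boundaryAt k i

variable {k}

lemma boundaryAt_apply (i : ι) (c : (ι → SignType) → k) (q : ι → SignType) :
    boundaryAt k i c q = if q i = 0 then ∑ ε : SignTypeˣ, c (Function.update q i ε) else 0 := rfl

lemma boundaryAt_mul_self (i : ι) : boundaryAt k i * boundaryAt k i = 0 := by
  ext c q
  simp [boundaryAt_apply]

lemma boundaryAt_commute (i j : ι) : Commute (boundaryAt k i) (boundaryAt k j) := by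
  obtain rfl | hij := eq_or_ne i j
  · rfl
  refine LinearMap.ext fun c => funext fun q => ?_
  change boundaryAt k i (boundaryAt k j c) q = boundaryAt k j (boundaryAt k i c) q
  simp only [boundaryAt_apply, Function.update_of_ne hij, Function.update_of_ne hij.symm]
  by_cases hi : q i = 0 <;> by_cases hj : q j = 0
  · simp only [hi, hj, if_true, Function.update_comm hij]
    exact Finset.sum_comm
  all_goals simp only [hi, hj, if_true, if_false, Finset.sum_const_zero]

lemma coneAt_apply (i : ι) (ε : SignTypeˣ) (c : (ι → SignType) → k) (q : ι → SignType) :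
    coneAt k i ε c q = if q i = ε then c (Function.update q i 0) else 0 := rfl

lemma boundaryAt_commute_coneAt {i j : ι} (hij : i ≠ j) (ε : SignTypeˣ) :
    Commute (boundaryAt k i) (coneAt k j ε) := by
  refine LinearMap.ext fun c => funext fun q => ?_
  by_cases hi : q i = 0 <;> by_cases hj : q j = ε <;>
    simp [boundaryAt_apply, coneAt_apply, hij, hij.symm, hi, hj, Function.update_comm hij]

lemma coe_neg_ne (ε : SignTypeˣ) : ((-ε : SignTypeˣ) : SignType) ≠ ε := by decide +revert

lemma sum_signTypeUnits {M : Type*} [AddCommMonoid M] (f : SignTypeˣ → M) (ε : SignTypeˣ) :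
    ∑ η, f η = f ε + f (-ε) := by
  have huniv : Finset.univ = {ε, -ε} := by decide +revert
  rw [huniv, Finset.sum_pair (by decide +revert)]

variable [CharP k 2]

lemma boundaryAt_mul_coneAt_add (i : ι) (ε : SignTypeˣ) :
    boundaryAt k i * coneAt k i ε + coneAt k i ε * boundaryAt k i = 1 + flattenAt k i ε := by
  refine LinearMap.ext fun c => funext fun q => ?_
  change boundaryAt k i (coneAt k i ε c) q + coneAt k i ε (boundaryAt k i c) q =
    c q + if q i = 0 then 0 else c (Function.update q i (-ε : SignTypeˣ))
  simp only [boundaryAt_apply, coneAt_apply, Function.update_self, Function.update_idem, if_true,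
    sum_signTypeUnits _ ε]
  have hcases : q i = 0 ∨ q i = ε ∨ q i = (-ε : SignTypeˣ) := by
    generalize q i = a
    decide +revert
  have hupdate {a : SignType} (h : q i = a) : Function.update q i a = q := by
    rw [← h, Function.update_eq_self]
  obtain h | h | h := hcases
  · simp only [h, ε.ne_zero.symm, coe_neg_ne ε, if_true, if_false, hupdate h, add_zero]
  · simp only [h, ε.ne_zero, if_true, if_false, hupdate h, zero_add]
  · simp only [h, (-ε).ne_zero, coe_neg_ne ε, if_false, hupdate h, add_zero,
      CharTwo.add_self_eq_zero]

variable [Fintype ι]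

lemma boundary_mul_self : boundary k * boundary k = (0 : Module.End k ((ι → SignType) → k)) := by
  have h (s : Finset ι) : (∑ i ∈ s, boundaryAt k i) * ∑ i ∈ s, boundaryAt k i = 0 := by
    induction s using Finset.induction_on with
    | empty => exact mul_zero _
    | insert i s hi ih =>
      have hcomm := Commute.sum_right s _ (boundaryAt k i) fun j _ => boundaryAt_commute i j
      rw [Finset.sum_insert hi, mul_add, add_mul, add_mul, ih, boundaryAt_mul_self, zero_add,
        add_zero, hcomm.eq, add_self_eq_zero_of_charTwo (k := k)]
  exact h Finset.univ

lemma boundary_mul_coneAt_add (i : ι) (ε : SignTypeˣ) :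
    boundary k * coneAt k i ε + coneAt k i ε * boundary k = 1 + flattenAt k i ε := by
  rw [boundary, Finset.sum_mul, Finset.mul_sum, ← Finset.sum_add_distrib, Finset.sum_eq_single i,
    boundaryAt_mul_coneAt_add]
  · intro j _ hj
    rw [(boundaryAt_commute_coneAt hj ε).eq, add_self_eq_zero_of_charTwo (k := k)]
  · exact fun h => absurd (Finset.mem_univ i) h

end CrossPolytope

section CellularChains

variable {k : Type u} {ι : Type} [Field k] [DecidableEq ι] [Fintype ι]

/-- The number of coordinates at which a sign vector vanishes. -/
def numZeros (q : ι → SignType) : ℕ := (Finset.univ.filter (q · = 0)).card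

omit [DecidableEq ι] in
lemma numZeros_eq_zero_iff {q : ι → SignType} : numZeros q = 0 ↔ ∀ i, q i ≠ 0 := by
  rw [numZeros, Finset.card_filter_eq_zero_iff]
  exact ⟨fun h i => h i (Finset.mem_univ i), fun h i _ => h i⟩

omit [DecidableEq ι] in
lemma numZeros_eq_card_iff {q : ι → SignType} : numZeros q = Fintype.card ι ↔ q = 0 := by
  rw [numZeros, ← Finset.card_univ, Finset.card_filter_eq_iff]
  exact ⟨fun h => funext fun i => h i (Finset.mem_univ i), fun h i _ => congrFun h i⟩

lemma numZeros_update_zero {q : ι → SignType} {i : ι} (hq : q i ≠ 0) :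
    numZeros (Function.update q i 0) = numZeros q + 1 := by
  have h : Finset.univ.filter (Function.update q i 0 · = 0) =
      insert i (Finset.univ.filter (q · = 0)) := by
    ext j
    obtain rfl | hj := eq_or_ne j i <;> simp [*]
  rw [numZeros, h, Finset.card_insert_of_notMem (by simpa using hq), numZeros]

lemma numZeros_update {q : ι → SignType} {i : ι} (hq : q i = 0) (ε : SignTypeˣ) :
    numZeros (Function.update q i ε) + 1 = numZeros q := by
  have hε : Function.update q i (ε : SignType) i ≠ 0 := by
    rw [Function.update_self]
    exact ε.ne_zero
  rw [← numZeros_update_zero hε, Function.update_idem, ← hq, Function.update_eq_self]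

variable (k) in
/-- The chains supported on the cells in `K` with `s` vanishing coordinates. -/
def chainsOn (K : Set (ι → SignType)) (s : ℕ) : Submodule k ((ι → SignType) → k) where
  carrier := {c | ∀ q, c q ≠ 0 → q ∈ K ∧ numZeros q = s}
  zero_mem' q hq := absurd rfl hq
  add_mem' {c c'} hc hc' q hq := by
    by_cases h : c q = 0
    · exact hc' q fun h' => hq (by rw [Pi.add_apply, h, h', add_zero])
    · exact hc q h
  smul_mem' a c hc q hq := hc q (right_ne_zero_of_mul hq)

variable {K : Set (ι → SignType)} {s : ℕ} {c : (ι → SignType) → k}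

omit [DecidableEq ι] in
lemma apply_eq_zero_of_notMem (hc : c ∈ chainsOn k K s) {q : ι → SignType} (hq : q ∉ K) :
    c q = 0 := by
  by_contra h
  exact hq (hc q h).1

lemma boundary_apply (c : (ι → SignType) → k) (q : ι → SignType) :
    boundary k c q = ∑ i, boundaryAt k i c q := by
  rw [boundary, LinearMap.sum_apply, Finset.sum_apply]

lemma boundary_apply_update_zero {q : ι → SignType} (hq : ∀ i, q i ≠ 0) (i : ι)
    (c : (ι → SignType) → k) :
    boundary k c (Function.update q i 0) = ∑ ε : SignTypeˣ, c (Function.update q i ε) := by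
  rw [boundary_apply, Finset.sum_eq_single i]
  · simp only [boundaryAt_apply, Function.update_self, Function.update_idem, if_true]
  · intro j _ hj
    rw [boundaryAt_apply, Function.update_of_ne hj, if_neg (hq j)]
  · exact fun h => absurd (Finset.mem_univ i) h

/-- A set of cells is closed if it contains the faces of its members. -/
def IsClosedUnderFaces (K : Set (ι → SignType)) : Prop :=
  ∀ q ∈ K, ∀ i, Function.update q i 0 ∈ K

lemma boundary_mem_chainsOn (hK : IsClosedUnderFaces K) (hc : c ∈ chainsOn k K s) :
    boundary k c ∈ chainsOn k K (s + 1) := by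
  intro q hq
  rw [boundary_apply] at hq
  obtain ⟨i, -, hi⟩ := Finset.exists_ne_zero_of_sum_ne_zero hq
  rw [boundaryAt_apply] at hi
  obtain ⟨hi₀, hi⟩ := ite_ne_right_iff.1 hi
  obtain ⟨ε, -, hε⟩ := Finset.exists_ne_zero_of_sum_ne_zero hi
  obtain ⟨hK', hs⟩ := hc _ hε
  refine ⟨?_, hs ▸ (numZeros_update hi₀ ε).symm⟩
  have h := hK _ hK' i
  rwa [Function.update_idem, ← hi₀, Function.update_eq_self] at h

lemma coneAt_mem_chainsOn {i : ι} {ε : SignTypeˣ}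
    (hK : ∀ q, Function.update q i 0 ∈ K → q i = ε → q ∈ K) (hc : c ∈ chainsOn k K (s + 1)) :
    coneAt k i ε c ∈ chainsOn k K s := by
  intro q hq
  rw [coneAt_apply] at hq
  obtain ⟨hε, hq⟩ := ite_ne_right_iff.1 hq
  obtain ⟨hK', hs⟩ := hc _ hq
  rw [numZeros_update_zero (hε ▸ ε.ne_zero)] at hs
  exact ⟨hK q hK' hε, Nat.succ_injective hs⟩

variable [CharP k 2]

lemma boundary_coneAt (i : ι) (ε : SignTypeˣ) (hc : boundary k c = 0) :
    boundary k (coneAt k i ε c) = c + flattenAt k i ε c := by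
  have h := LinearMap.congr_fun (boundary_mul_coneAt_add (k := k) i ε) c
  change boundary k (coneAt k i ε c) + coneAt k i ε (boundary k c) = c + flattenAt k i ε c at h
  rwa [hc, map_zero, add_zero] at h

lemma boundary_boundary (c : (ι → SignType) → k) : boundary k (boundary k c) = 0 :=
  LinearMap.congr_fun boundary_mul_self c

lemma apply_update_eq_of_boundary_eq_zero (hδ : boundary k c = 0) {q : ι → SignType}
    (hq : ∀ i, q i ≠ 0) (i : ι) (ε η : SignTypeˣ) :
    c (Function.update q i ε) = c (Function.update q i η) := by
  have h := boundary_apply_update_zero hq i c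
  rw [hδ, sum_signTypeUnits _ ε] at h
  have hneg := CharTwo.add_eq_zero.1 h.symm
  have hunits : ∀ ε η : SignTypeˣ, η = ε ∨ η = -ε := by decide
  obtain rfl | rfl := hunits ε η
  exacts [rfl, hneg]

lemma apply_eq_of_boundary_eq_zero (hδ : boundary k c = 0) {q : ι → SignType}
    (hq : ∀ i, q i ≠ 0) : c q = c 1 := by
  have h (S : Finset ι) : c (S.piecewise q 1) = c 1 := by
    induction S using Finset.induction_on with
    | empty => rw [Finset.piecewise_empty]
    | insert i S hi ih =>
      have hS (j : ι) : S.piecewise q 1 j ≠ 0 :=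
        Finset.piecewise_cases S q 1 (· ≠ 0) (hq j) one_ne_zero
      rw [Finset.piecewise_insert, ← ih, ← Units.val_mk0 (hq i),
        apply_update_eq_of_boundary_eq_zero hδ hS i _ 1, Units.val_one]
      refine congrArg c (Function.update_eq_self_iff.2 ?_)
      rw [Finset.piecewise_eq_of_notMem _ _ _ hi, Pi.one_apply]
  rw [← h Finset.univ, Finset.piecewise_univ]

/-- Coning off one coordinate after another pushes a cycle into the facets. -/
lemma exists_add_boundary_vanishing (hc : c ∈ chainsOn k Set.univ (s + 1)) (hδ : boundary k c = 0)
    (S : Finset ι) : ∃ b ∈ chainsOn k Set.univ s,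
      ∀ q : ι → SignType, (∃ i ∈ S, q i = 0) → c q + boundary k b q = 0 := by
  induction S using Finset.induction_on with
  | empty => exact ⟨0, zero_mem _, fun q ⟨i, hi, _⟩ => absurd hi (Finset.notMem_empty i)⟩
  | insert i S _ ih =>
    obtain ⟨b, hb, hS⟩ := ih
    have hc' := add_mem hc (boundary_mem_chainsOn (fun _ _ _ => trivial) hb)
    have hδ' : boundary k (c + boundary k b) = 0 := by
      rw [map_add, hδ, boundary_boundary, add_zero]
    have hflatten : c + boundary k (b + coneAt k i 1 (c + boundary k b)) =
        flattenAt k i 1 (c + boundary k b) := by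
      rw [map_add, boundary_coneAt i 1 hδ', ← add_assoc, ← add_assoc,
        add_self_eq_zero_of_charTwo (k := k), zero_add]
    refine ⟨b + coneAt k i 1 (c + boundary k b),
      add_mem hb (coneAt_mem_chainsOn (fun _ _ _ => trivial) hc'), fun q hq => ?_⟩
    refine (congrFun hflatten q).trans (ite_eq_left_iff.2 fun hi => hS _ ?_)
    obtain ⟨j, hj, hj₀⟩ := hq
    have hji : j ≠ i := fun h => hi (h ▸ hj₀)
    exact ⟨j, Finset.mem_of_mem_insert_of_ne hj hji, by rwa [Function.update_of_ne hji]⟩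

lemma exists_boundary_eq (hc : c ∈ chainsOn k Set.univ (s + 1)) (hδ : boundary k c = 0) :
    ∃ b ∈ chainsOn k Set.univ s, boundary k b = c := by
  obtain ⟨b, hb, h⟩ := exists_add_boundary_vanishing hc hδ Finset.univ
  have hmem := add_mem hc (boundary_mem_chainsOn (fun _ _ _ => trivial) hb)
  have h₀ : c + boundary k b = 0 := by
    funext q
    by_contra hq
    obtain ⟨i, hi⟩ : (Finset.univ.filter (q · = 0)).Nonempty :=
      Finset.card_pos.1 (s.succ_pos.trans_eq (hmem q hq).2.symm)
    exact hq (h q ⟨i, Finset.mem_univ i, (Finset.mem_filter.1 hi).2⟩)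
  exact ⟨b, hb, add_left_cancel (h₀.trans (add_self_eq_zero_of_charTwo (k := k) c).symm)⟩

/-- The faces of the cell `v`. -/
def faces (v : ι → SignType) : Set (ι → SignType) := {q | ∀ i, q i = 0 ∨ q i = v i}

omit [Fintype ι] in
lemma isClosedUnderFaces_faces (v : ι → SignType) : IsClosedUnderFaces (faces v) := by
  intro q hq i j
  obtain rfl | hj := eq_or_ne j i
  · exact Or.inl (Function.update_self ..)
  · rw [Function.update_of_ne hj]
    exact hq j

lemma exists_boundary_eq_of_faces {v : ι → SignType} (hv : v ≠ 0)
    (hc : c ∈ chainsOn k (faces v) (s + 1)) (hδ : boundary k c = 0) :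
    ∃ b ∈ chainsOn k (faces v) s, boundary k b = c := by
  obtain ⟨i, hi⟩ := Function.ne_iff.1 hv
  obtain ⟨ε, hε⟩ : ∃ ε : SignTypeˣ, v i = ε := ⟨Units.mk0 (v i) hi, rfl⟩
  refine ⟨coneAt k i ε c, coneAt_mem_chainsOn (fun q hq hqi j => ?_) hc, ?_⟩
  · obtain rfl | hj := eq_or_ne j i
    · exact Or.inr (hqi.trans hε.symm)
    · have h := hq j
      rwa [Function.update_of_ne hj] at h
  · have hflatten : flattenAt k i ε c = 0 := by
      funext q
      refine ite_eq_left_iff.2 fun _ => apply_eq_zero_of_notMem hc fun hq => ?_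
      have h := hq i
      rw [Function.update_self, hε] at h
      exact h.elim (-ε).ne_zero (coe_neg_ne ε)
    rw [boundary_coneAt i ε hδ, hflatten, add_zero]

lemma eq_zero_of_mem_chainsOn_faces {v : ι → SignType} (hv : v ≠ 0)
    (hc : c ∈ chainsOn k (faces v) 0) (hδ : boundary k c = 0) : c = 0 := by
  obtain ⟨i, -⟩ := Function.ne_iff.1 hv
  have hneg : ∀ a : SignType, a ≠ 0 → -a ≠ 0 ∧ -a ≠ a := by decide
  have hface {q : ι → SignType} (hq : c q ≠ 0) (j : ι) : q j ≠ 0 ∧ q j = v j := by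
    have hj : q j ≠ 0 := numZeros_eq_zero_iff.1 (hc q hq).2 j
    exact ⟨hj, ((hc q hq).1 j).resolve_left hj⟩
  funext q
  by_contra hq
  have hq' : c (-q) ≠ 0 := by
    rw [apply_eq_of_boundary_eq_zero (q := -q) hδ fun j => (hneg _ (hface hq j).1).1,
      ← apply_eq_of_boundary_eq_zero hδ fun j => (hface hq j).1]
    exact hq
  exact (hneg _ (hface hq i).1).2 ((hface hq' i).2.trans (hface hq i).2.symm)

end CellularChains

section EulerClass

variable {k : Type u} {G H ι : Type} [Field k] [Group G] [Group H] [MulAction G ι]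

/-- The action of `G × {±1}` on sign vectors, by permutations of the coordinates and by signs. -/
instance signVectorMulAction : MulAction (G × SignTypeˣ) (ι → SignType) where
  smul x q i := x.2 * q (x.1⁻¹ • i)
  one_smul q := funext fun i => by
    change ((1 : SignTypeˣ) : SignType) * q ((1 : G)⁻¹ • i) = q i
    rw [Units.val_one, one_mul, inv_one, one_smul]
  mul_smul x y q := funext fun i => by
    change ((x.2 * y.2 : SignTypeˣ) : SignType) * q ((x.1 * y.1)⁻¹ • i) =
      x.2 * (y.2 * q (y.1⁻¹ • x.1⁻¹ • i))
    rw [Units.val_mul, mul_assoc, mul_inv_rev, mul_smul]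

lemma signVector_smul_apply (x : G × SignTypeˣ) (q : ι → SignType) (i : ι) :
    (x • q) i = x.2 * q (x.1⁻¹ • i) := rfl

lemma signVector_smul_apply_eq_zero_iff {x : G × SignTypeˣ} {q : ι → SignType} {i : ι} :
    (x • q) i = 0 ↔ q (x.1⁻¹ • i) = 0 := by
  rw [signVector_smul_apply, Units.mul_right_eq_zero]

lemma signVector_smul_zero (x : G × SignTypeˣ) : x • (0 : ι → SignType) = 0 :=
  funext fun _ => mul_zero _

lemma inr_smul (ε : SignTypeˣ) (q : ι → SignType) :
    MonoidHom.inr G SignTypeˣ ε • q = (ε : SignType) • q := funext fun i => by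
  rw [signVector_smul_apply, MonoidHom.inr_apply, inv_one, one_smul, Pi.smul_apply, smul_eq_mul]

lemma smul_mem_faces {x : G × SignTypeˣ} {v : ι → SignType} (hx : x • v = v) {q : ι → SignType}
    (hq : q ∈ faces v) : x • q ∈ faces v := fun i => by
  rw [← congrFun hx i, signVector_smul_apply_eq_zero_iff, signVector_smul_apply,
    signVector_smul_apply]
  exact (hq (x.1⁻¹ • i)).imp_right (congrArg (_ * ·))

variable [DecidableEq ι]

lemma smul_update (x : G × SignTypeˣ) (q : ι → SignType) (i : ι) (a : SignType) :
    x • Function.update q i a = Function.update (x • q) (x.1 • i) (x.2 * a) := by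
  funext j
  obtain rfl | hj := eq_or_ne j (x.1 • i)
  · rw [signVector_smul_apply, inv_smul_smul, Function.update_self, Function.update_self]
  · have hj' : x.1⁻¹ • j ≠ i := fun h => hj (inv_smul_eq_iff.1 h)
    rw [signVector_smul_apply, Function.update_of_ne hj', Function.update_of_ne hj,
      signVector_smul_apply]

lemma boundaryAt_translation (x : G × SignTypeˣ) (i : ι) (c : (ι → SignType) → k) :
    boundaryAt k (x.1 • i) (translation k _ _ x c) = translation k _ _ x (boundaryAt k i c) := by
  funext q
  obtain ⟨q, rfl⟩ := MulAction.surjective x q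
  simp only [boundaryAt_apply, translation_apply, inv_smul_smul,
    signVector_smul_apply_eq_zero_iff]
  refine congrArg (ite _ · _) (Fintype.sum_equiv (Equiv.mulLeft x.2⁻¹) _ _ fun ε => ?_)
  rw [smul_update, inv_smul_smul]
  change c (Function.update q (x.1⁻¹ • x.1 • i) ((x.2⁻¹ * ε : SignTypeˣ) : SignType)) = _
  rw [inv_smul_smul, Equiv.coe_mulLeft]

variable [Fintype ι]

omit [DecidableEq ι] in
lemma numZeros_smul (x : G × SignTypeˣ) (q : ι → SignType) : numZeros (x • q) = numZeros q := by
  refine Finset.card_bijective (x.1⁻¹ • ·) (MulAction.bijective _) fun i => ?_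
  simp only [Finset.mem_filter, Finset.mem_univ, true_and, signVector_smul_apply_eq_zero_iff]

variable (k G ι) in
/-- The boundary operator of the cross-polytope as a morphism of representations. -/
noncomputable def boundaryHom :
    functions k (G × SignTypeˣ) (ι → SignType) ⟶ functions k (G × SignTypeˣ) (ι → SignType) :=
  Rep.ofHom ⟨boundary k, fun x => LinearMap.ext fun c => by
    change boundary k (translation k _ _ x c) = translation k _ _ x (boundary k c)
    rw [boundary, LinearMap.sum_apply, LinearMap.sum_apply, map_sum]
    exact (Fintype.sum_equiv (MulAction.toPerm x.1) _ _ fun i =>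
      (boundaryAt_translation x i c).symm).symm⟩

variable [CharP k 2]

variable (k) in
/-- The chains supported on a closed set of cells which is stable under a group acting through
`θ`. -/
noncomputable def cellularComplex (θ : H →* G × SignTypeˣ) {K : Set (ι → SignType)}
    (hK : IsClosedUnderFaces K) (hθK : ∀ h, ∀ q ∈ K, θ h • q ∈ K) :
    GradedSubcomplex (Rep.resMap θ (boundaryHom k G ι)) where
  chains := chainsOn k K
  le_comap s h c hc q hq := by
    obtain ⟨hK, hs⟩ := hc ((θ h)⁻¹ • q) hq
    exact ⟨smul_inv_smul (θ h) q ▸ hθK h _ hK, by rwa [numZeros_smul] at hs⟩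
  map_mem hc := boundary_mem_chainsOn hK hc
  comp_self := by
    ext : 2
    exact LinearMap.ext fun c => boundary_boundary c

variable (k G ι) in
/-- The chain complex of the cross-polytope. -/
noncomputable abbrev crossPolytopeComplex : GradedSubcomplex (boundaryHom k G ι) :=
  cellularComplex k (MonoidHom.id (G × SignTypeˣ)) (K := Set.univ) (fun _ _ _ => trivial)
    fun _ _ _ => trivial

lemma crossPolytopeComplex_isExactAt (s : ℕ) : (crossPolytopeComplex k G ι).IsExactAt s :=
  fun _ hc => exists_boundary_eq hc

variable (k G ι) in
/-- The augmentation: a cycle of degree zero is constant on the facets. -/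
noncomputable def augmentation : (crossPolytopeComplex k G ι).Z 0 ⟶ shiftPow k (G × SignTypeˣ) 0 :=
  Rep.ofHom ⟨(LinearMap.proj 1 : ((ι → SignType) → k) →ₗ[k] k) ∘ₗ Submodule.subtype _, fun x =>
    LinearMap.ext fun c => by
      change c.1 (x⁻¹ • (1 : ι → SignType)) = c.1 1
      refine apply_eq_of_boundary_eq_zero c.2.2 fun i => ?_
      rw [Ne, signVector_smul_apply_eq_zero_iff]
      exact one_ne_zero⟩

lemma one_notMem_norms_tensorUnit : (1 : k) ∉ norms (𝟙_ (Rep.{u} k SignTypeˣ)) := by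
  rintro ⟨a, ha⟩
  have h : (𝟙_ (Rep.{u} k SignTypeˣ)).ρ.norm a = ∑ _ : SignTypeˣ, (a : k) := by
    rw [Representation.norm, LinearMap.sum_apply]
    rfl
  rw [h, sum_signTypeUnits _ 1, CharTwo.add_self_eq_zero] at ha
  exact zero_ne_one ha

omit [DecidableEq ι] [CharP k 2] in
variable (k ι) in
/-- The sum of all facets. -/
noncomputable def facetSum (q : ι → SignType) : k := if numZeros q = 0 then 1 else 0

lemma facetSum_mem_cycles : facetSum k ι ∈ chainsOn k Set.univ 0 ⊓ (boundary k).ker := by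
  refine ⟨fun q hq => ⟨trivial, (ite_ne_right_iff.1 hq).1⟩, funext fun q => ?_⟩
  rw [boundary_apply]
  refine Finset.sum_eq_zero fun i _ => ?_
  rw [boundaryAt_apply, ite_eq_right_iff]
  intro hq
  have h : numZeros (Function.update q i (1 : SignTypeˣ)) =
      numZeros (Function.update q i (-1 : SignTypeˣ)) :=
    Nat.succ_injective ((numZeros_update hq 1).trans (numZeros_update hq (-1)).symm)
  rw [sum_signTypeUnits _ 1, facetSum, facetSum, h, CharTwo.add_self_eq_zero]

lemma not_isNull_augmentation :
    ¬ IsNull (Rep.resMap (MonoidHom.inr G SignTypeˣ) (augmentation k G ι)) := fun h => by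
  have hinv (x : G × SignTypeˣ) : translation k _ _ x (facetSum k ι) = facetSum k ι :=
    funext fun q => by rw [translation_apply, facetSum, facetSum, numZeros_smul]
  have hone : facetSum k ι 1 = 1 :=
    if_pos (numZeros_eq_zero_iff.2 fun _ => one_ne_zero)
  refine one_notMem_norms_tensorUnit (k := k) ?_
  rw [← hone]
  exact h.map_mem_norms (x := ⟨facetSum k ι, facetSum_mem_cycles⟩) fun _ => Subtype.ext (hinv _)

omit [DecidableEq ι] [Fintype ι] [CharP k 2] in
variable (k ι) in
lemma exists_apply_add_apply_neg_eq_one [Finite ι] :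
    ∃ κ : (ι → SignType) → k, ∀ q ≠ 0, κ q + κ (-q) = 1 := by
  classical
  let e := Finite.equivFin (ι → SignType)
  refine ⟨fun q => if e q < e (-q) then 1 else 0, fun q hq => ?_⟩
  have hne : e q ≠ e (-q) := fun h => by
    have hself : ∀ a : SignType, a = -a → a = 0 := by decide
    exact hq (funext fun i => hself _ (congrFun (e.injective h) i))
  have hnegneg : - -q = q := funext fun i => neg_neg (q i)
  simp only [hnegneg]
  obtain h | h := hne.lt_or_gt
  · rw [if_pos h, if_neg h.not_gt, add_zero]
  · rw [if_neg h.not_gt, if_pos h, zero_add]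

lemma isNull_id_res_chains {s : ℕ} (hs : s < Fintype.card ι) :
    IsNull (𝟙 (Rep.res (MonoidHom.inr G SignTypeˣ) ((crossPolytopeComplex k G ι).X s))) := by
  obtain ⟨κ, hκ⟩ := exists_apply_add_apply_neg_eq_one k ι
  have hmul (c) (hc : c ∈ chainsOn k Set.univ s) :
      LinearMap.mulLeft k κ c ∈ chainsOn k Set.univ s :=
    fun q hq => hc q (right_ne_zero_of_mul hq)
  refine ⟨(LinearMap.mulLeft k κ).restrict hmul, ?_⟩
  ext : 2
  refine LinearMap.ext fun c => Subtype.ext (funext fun q => ?_)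
  have hterm (ε : SignTypeˣ) : κ ((MonoidHom.inr G SignTypeˣ ε)⁻¹ • q) *
      c.1 ((MonoidHom.inr G SignTypeˣ ε⁻¹)⁻¹ • (MonoidHom.inr G SignTypeˣ ε)⁻¹ • q) =
        κ ((ε : SignType) • q) * c.1 q := by
    have hε : ∀ ε : SignTypeˣ, ε⁻¹ = ε := by decide
    rw [← map_inv, ← map_inv, inv_inv, ← mul_smul, ← map_mul, mul_inv_cancel, map_one, one_smul,
      hε, inr_smul]
  change ((trace (X := Rep.res (MonoidHom.inr G SignTypeˣ) ((crossPolytopeComplex k G ι).X s))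
    (Y := Rep.res (MonoidHom.inr G SignTypeˣ) ((crossPolytopeComplex k G ι).X s))
    ((LinearMap.mulLeft k κ).restrict hmul)).hom c).1 q = c.1 q
  rw [trace_apply, sum_signTypeUnits _ 1]
  refine (congrArg₂ (· + ·) (hterm 1) (hterm (-1))).trans ?_
  rw [← add_mul]
  change (κ ((1 : SignType) • q) + κ ((-1 : SignType) • q)) * c.1 q = c.1 q
  by_cases hc : c.1 q = 0
  · rw [hc, mul_zero]
  · have hq : q ≠ 0 := fun h => hs.ne ((c.2 q hc).2.symm.trans (numZeros_eq_card_iff.2 h))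
    have hneg : (-1 : SignType) • q = -q := funext fun i => neg_one_mul (q i)
    rw [one_smul, hneg, hκ q hq, one_mul]

omit [DecidableEq ι] [CharP k 2] in
lemma emptyCell_mem_chainsOn {K : Set (ι → SignType)} (hK : 0 ∈ K) :
    Pi.single 0 1 ∈ chainsOn k K (Fintype.card ι) := fun q hq => by
  obtain rfl : q = 0 := not_imp_comm.1 (Pi.single_eq_of_ne · _) hq
  exact ⟨hK, numZeros_eq_card_iff.2 rfl⟩

omit [DecidableEq ι] [CharP k 2] in
lemma translation_emptyCell (x : G × SignTypeˣ) :
    translation k _ (ι → SignType) x (Pi.single 0 1) = Pi.single 0 1 := funext fun q => by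
  rw [translation_apply, Pi.single_apply, Pi.single_apply]
  exact if_congr (by rw [inv_smul_eq_iff, signVector_smul_zero]) rfl rfl

omit [DecidableEq ι] [CharP k 2] in
lemma eq_smul_emptyCell {c : (ι → SignType) → k} (hc : c ∈ chainsOn k Set.univ (Fintype.card ι)) :
    c = c 0 • Pi.single 0 1 := by
  funext q
  obtain rfl | hq := eq_or_ne q 0
  · rw [Pi.smul_apply, Pi.single_eq_same, smul_eq_mul, mul_one]
  · rw [Pi.smul_apply, Pi.single_eq_of_ne hq, smul_zero]
    by_contra h
    exact hq (numZeros_eq_card_iff.1 (hc q h).2)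

omit [CharP k 2] in
lemma boundary_emptyCell : boundary k (Pi.single (0 : ι → SignType) 1) = 0 := funext fun q => by
  by_contra hq
  have hmem := boundary_mem_chainsOn (k := k) (K := Set.univ) (fun _ _ _ => trivial)
    (emptyCell_mem_chainsOn (Set.mem_univ (0 : ι → SignType))) q hq
  exact (Nat.lt_succ_self _).not_ge (hmem.2.symm.trans_le (Finset.card_le_univ _))

omit [DecidableEq ι] in
/-- The mod-two Euler class of the permutation representation, twisted by the sign representation of
`{±1}`: the class obtained by dimension shifting along the chain complex of the cross-polytope. -/
theorem exists_eulerClass [Finite G] :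
    ∃ e ∈ (shiftPow k (G × SignTypeˣ) (Fintype.card ι)).ρ.invariants,
    e ∉ norms (Rep.res (MonoidHom.inr G SignTypeˣ) (shiftPow k _ (Fintype.card ι))) ∧
    ∀ {H : Type} [Group H] [Fintype H] {Φ : H →* G × SignTypeˣ}, Function.Injective Φ →
      ∀ {v : ι → SignType}, v ≠ 0 → (∀ h, Φ h • v = v) →
      e ∈ norms (Rep.res Φ (shiftPow k _ (Fintype.card ι))) := by
  classical
  obtain ⟨φ, hφ₀, hφ⟩ :=
    GradedSubcomplex.exists_isDimensionShift crossPolytopeComplex_isExactAt (augmentation k G ι)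
  let z : (crossPolytopeComplex k G ι).Z (Fintype.card ι) :=
    ⟨Pi.single 0 1, emptyCell_mem_chainsOn (Set.mem_univ _), boundary_emptyCell⟩
  have hz : z ∈ ((crossPolytopeComplex k G ι).Z (Fintype.card ι)).ρ.invariants :=
    fun x => Subtype.ext (translation_emptyCell x)
  refine ⟨(φ _).hom z, map_mem_invariants (φ _) hz, fun he => ?_, ?_⟩
  · refine not_isNull_augmentation (k := k) (G := G) (ι := ι) ?_
    rw [← hφ₀]
    refine GradedSubcomplex.isNull_res_zero hφ crossPolytopeComplex_isExactAt _
      (fun s => isNull_id_res_chains) ?_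
    exact isNull_of_eq_smul (x := z)
      (a := (LinearMap.proj 0 : ((ι → SignType) → k) →ₗ[k] k) ∘ₗ Submodule.subtype _)
      (fun ε => hz _) (fun c => Subtype.ext (eq_smul_emptyCell c.2.1)) he
  · intro H _ _ Φ hΦ v hv hfix
    let V := cellularComplex k Φ (isClosedUnderFaces_faces v) fun h _ => smul_mem_faces (hfix h)
    have h₀ : Subsingleton (V.Z 0) := ⟨fun c c' => Subtype.ext <|
      (eq_zero_of_mem_chainsOn_faces hv c.2.1 c.2.2).trans
        (eq_zero_of_mem_chainsOn_faces hv c'.2.1 c'.2.2).symm⟩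
    have hnull := GradedSubcomplex.isNull_cyclesInclusion_comp hφ hΦ (V := V)
      (fun s c hc q hq => ⟨trivial, (hc q hq).2⟩) (fun s c hc => exists_boundary_eq_of_faces hv hc)
      h₀ (Fintype.card ι)
    exact hnull.map_mem_norms (x := ⟨Pi.single 0 1,
      emptyCell_mem_chainsOn fun _ => Or.inl rfl, boundary_emptyCell⟩)
      fun h => Subtype.ext (translation_emptyCell (Φ h))

end EulerClass

section SubgroupsOfIndexTwo

variable {G H ι : Type} [Group G] [Group H]

lemma exists_le_index_eq_of_isPGroup {p : ℕ} [Fact p.Prime] [Finite H] (hH : IsPGroup p H)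
    {K : Subgroup H} (hK : K ≠ ⊤) : ∃ L, K ≤ L ∧ L.index = p := by
  obtain ⟨n, hn⟩ := IsPGroup.iff_card.1 hH
  obtain ⟨m, hm⟩ := IsPGroup.iff_card.1 (hH.to_subgroup K)
  have hp := (Fact.out : p.Prime)
  have hmn : m < n := by
    rw [← Nat.pow_lt_pow_iff_right hp.one_lt, ← hm, ← hn]
    exact (K.card_le_card_group).lt_of_ne fun h => hK (K.eq_top_of_card_eq h)
  obtain ⟨n, rfl⟩ := Nat.exists_eq_add_one_of_ne_zero hmn.ne_bot
  obtain ⟨L, hL, hKL⟩ := Sylow.exists_subgroup_card_pow_prime_le p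
    (hn ▸ pow_dvd_pow p n.le_succ) K hm (Nat.lt_succ_iff.1 hmn)
  have h := L.card_mul_index
  rw [hL, hn, pow_succ] at h
  exact ⟨L, hKL, Nat.eq_of_mul_eq_mul_left (pow_pos hp.pos n) h⟩

lemma exists_ker_eq_of_index_eq_two {L : Subgroup H} (hL : L.index = 2) :
    ∃ χ : H →* SignTypeˣ, χ.ker = L := by
  classical
  refine ⟨MonoidHom.mk' (fun h => if h ∈ L then 1 else -1) fun a b => ?_, ?_⟩
  · rw [Subgroup.mul_mem_iff_of_index_two hL]
    by_cases ha : a ∈ L <;> by_cases hb : b ∈ L <;> simp [ha, hb]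
  · ext h
    rw [MonoidHom.mem_ker, MonoidHom.mk'_apply, ite_eq_left_iff]
    exact not_imp_comm.trans (imp_iff_right (by decide))

lemma exists_equivariant_extension {A : Type*} [Group A] {θ : H →* G}
    (hθ : Function.Injective θ) (χ : H →* A) : ∃ τ : G → A, ∀ h x, τ (θ h * x) = χ h * τ x := by
  obtain ⟨T, hT, -⟩ := θ.range.exists_isComplement_right 1
  refine ⟨fun x => χ ((MonoidHom.ofInjective hθ).symm (hT.equiv x).1), fun h x => ?_⟩
  change χ ((MonoidHom.ofInjective hθ).symm (hT.equiv (θ h * x)).1) = _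
  rw [hT.equiv_mul_left_of_mem ⟨h, rfl⟩, map_mul, map_mul]
  exact congrArg (χ · * _) ((MonoidHom.ofInjective hθ).symm_apply_apply h)

/-- A character which is trivial on the stabilizer of `o` spreads over the orbit of `o`. -/
lemma exists_fixed_signVector [MulAction G ι] {θ : H →* G} {χ : H →* SignTypeˣ} {o : ι}
    (ho : ∀ h, θ h • o = o → χ h = 1) :
    ∃ v : ι → SignType, v ≠ 0 ∧ ∀ h, θ.prod χ h • v = v := by
  have hχ : Function.FactorsThrough (fun h => (χ h : SignType)) fun h => θ h • o :=
      fun g g' (h : θ g • o = θ g' • o) => by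
    have hone := ho (g'⁻¹ * g) (by rw [map_mul, mul_smul, h, map_inv, inv_smul_smul])
    rw [map_mul, map_inv, inv_mul_eq_one] at hone
    exact congrArg _ hone.symm
  let v := Function.extend (fun h => θ h • o) (fun h => (χ h : SignType)) 0
  have hv (h : H) : v (θ h • o) = χ h := hχ.extend_apply 0 h
  refine ⟨v, fun h => (χ 1).ne_zero ?_, fun h => funext fun i => ?_⟩
  · rw [← hv, h, Pi.zero_apply]
  change χ h * v ((θ h)⁻¹ • i) = v i
  rw [← map_inv]
  by_cases hi : ∃ g, θ g • o = i
  · obtain ⟨g, rfl⟩ := hi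
    rw [← mul_smul, ← map_mul, hv, hv, ← Units.val_mul, ← map_mul, mul_inv_cancel_left]
  · have hi' : ¬ ∃ g, θ g • o = θ h⁻¹ • i := fun ⟨g, hg⟩ => hi ⟨h * g, by
      rw [map_mul, mul_smul, hg, map_inv, smul_inv_smul]⟩
    have hvi : v i = 0 := Function.extend_apply' _ _ _ hi
    have hvi' : v (θ h⁻¹ • i) = 0 := Function.extend_apply' _ _ _ hi'
    rw [hvi, hvi', mul_zero]

lemma exists_fixed_signVector_of_isPGroup [MulAction G ι] [FaithfulSMul G ι] [Finite H]
    [Nontrivial H] (hH : IsPGroup 2 H) {θ : H →* G} (hθ : Function.Injective θ) :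
    ∃ χ : H →* SignTypeˣ, χ.ker.index = 2 ∧
      ∃ v : ι → SignType, v ≠ 0 ∧ ∀ h, θ.prod χ h • v = v := by
  obtain ⟨g, hg⟩ := exists_ne (1 : H)
  obtain ⟨o, ho⟩ : ∃ o : ι, θ g • o ≠ o := by
    by_contra! h
    exact hg (hθ ((eq_of_smul_eq_smul fun o => by rw [h, one_smul]).trans (map_one θ).symm))
  have hK : (MulAction.stabilizer G o).comap θ ≠ ⊤ := fun h => ho (h.ge (Subgroup.mem_top g))
  have : Fact (Nat.Prime 2) := ⟨Nat.prime_two⟩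
  obtain ⟨L, hKL, hL⟩ := exists_le_index_eq_of_isPGroup hH hK
  obtain ⟨χ, rfl⟩ := exists_ker_eq_of_index_eq_two hL
  exact ⟨χ, hL, exists_fixed_signVector fun h ho => hKL (x := h) ho⟩

end SubgroupsOfIndexTwo

section StiefelWhitney

variable {k : Type u} {G : Type} [Field k] [Group G]

lemma horner_smul (a : k) (w : ∀ n, shiftPow k G n) (q : shift k G) :
    ∀ n, horner (fun i => a • w i) q n = a • horner w q n
  | 0 => rfl
  | n + 1 => by
    refine Eq.trans (congrArg (· + a • w (n + 1)) ?_) (smul_add a (horner w q n ⊗ₜ[k] q) _).symm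
    exact congrArg (· ⊗ₜ[k] q) (horner_smul a w q n)

variable (k G) (ι : Type) [CharP k 2] [Fintype G] [Fintype ι] [MulAction G ι]

/-- The coefficients of the Euler class over `G × {±1}` are the Stiefel–Whitney classes of the
permutation representation on `ι`. -/
theorem exists_stiefelWhitney [FaithfulSMul G ι] [Nonempty ι] : ∃ w : ∀ n, shiftPow k G n,
    (∀ n, w n ∈ (shiftPow k G n).ρ.invariants) ∧ w 0 = (1 : k) ∧
      w (Fintype.card ι) ∈ norms (shiftPow k G (Fintype.card ι)) ∧
        HasHornerRelation w (Fintype.card ι) := by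
  classical
  obtain ⟨e, he, heC, heH⟩ := exists_eulerClass (k := k) (G := G) (ι := ι)
  obtain ⟨w, hw, hwe, hew⟩ := exists_sub_horner_mem_norms _ he
  obtain ⟨a, ha⟩ : ∃ a : k, w 0 = a := ⟨_, rfl⟩
  have hw₀ : a ≠ 0 := fun h => heC <| by
    have hinr : Function.Injective (MonoidHom.inr G SignTypeˣ) := fun _ _ h => congrArg Prod.snd h
    have h := add_mem (res_mem_norms hinr hew) (horner_inflate_mem_norms (ha.trans h) _)
    rwa [sub_add_cancel] at h
  refine ⟨fun n => a⁻¹ • w n, fun n => Submodule.smul_mem _ _ (hw n), ?_, ?_, ?_⟩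
  · exact (congrArg (a⁻¹ • ·) ha).trans (inv_mul_cancel₀ hw₀)
  · have hinl : Function.Injective (MonoidHom.inl G SignTypeˣ) := fun _ _ h => congrArg Prod.fst h
    have hfix (g : G) : MonoidHom.inl G SignTypeˣ g • (1 : ι → SignType) = 1 := by
      funext _
      exact mul_one _
    change a⁻¹ • w (Fintype.card ι) ∈ _
    rw [hwe]
    exact Submodule.smul_mem _ _ (shiftPowMap_mem_norms (θ := MonoidHom.inl G SignTypeˣ)
      (φ := MonoidHom.id G) (fun _ _ => Prod.ext rfl (one_mul 1).symm) (heH hinl one_ne_zero hfix))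
  · intro H _ _ θ hθ hH _
    obtain ⟨χ, hχ, v, hv, hfix⟩ := exists_fixed_signVector_of_isPGroup (ι := ι) hH hθ
    obtain ⟨τ, hτ⟩ := exists_equivariant_extension hθ χ
    have hinj : Function.Injective (θ.prod χ) := fun _ _ h => hθ (congrArg Prod.fst h)
    refine ⟨χ.ker, hχ, signLog k ∘ τ, isHalfInvariant_signLog hτ, ?_⟩
    rw [horner_smul]
    exact Submodule.smul_mem _ _ (horner_mem_norms_of_graph hτ hinj hew (heH hinj hv hfix))

end StiefelWhitney

section StableHom

variable {k : Type u} {G : Type} [Field k] [Group G] [Fintype G] {A B C X Y : Rep.{u} k G}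

lemma exists_coregular_surjective : ∃ ε : coregular k G ⟶ 𝟙_ (Rep.{u} k G),
    IsNull ε ∧ Function.Surjective ε.hom := by
  classical
  refine ⟨trace (Y := 𝟙_ (Rep.{u} k G)) (LinearMap.proj (R := k) (φ := fun _ : G => k) 1),
    ⟨_, rfl⟩, fun c => ⟨(Pi.single 1 c : G → k), ?_⟩⟩
  rw [trace_apply]
  refine (Finset.sum_eq_single (1 : G) (fun g _ hg => ?_) (by simp)).trans ?_
  · change (Pi.single 1 c : G → k) (g⁻¹⁻¹ • (1 : G)) = 0
    rw [Pi.single_eq_of_ne (by simpa using hg)]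
  · change (Pi.single 1 c : G → k) (1⁻¹⁻¹ • (1 : G)) = c
    simp

lemma isNull_id_of_projective (X : Rep.{u} k G) [Projective X] : IsNull (𝟙 X) := by
  obtain ⟨ε, hε, hsurj⟩ := exists_coregular_surjective (k := k) (G := G)
  have : Epi (X ◁ ε ≫ (ρ_ X).hom) := by
    have : Epi (X ◁ ε) := (Rep.epi_iff_surjective _).2 <|
      LinearMap.lTensor_surjective X (g := ε.hom.toLinearMap) hsurj
    exact epi_comp _ _
  rw [← Projective.factorThru_comp (𝟙 X) (X ◁ ε ≫ (ρ_ X).hom)]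
  exact ((hε.whiskerLeft X).comp _).precomp _

/-- Every morphism from `X` to `Y` vanishes in the stable category. -/
def IsStablyOrthogonal (X Y : Rep.{u} k G) : Prop := ∀ f : X ⟶ Y, IsNull f

lemma IsShortExact.isStablyOrthogonal_iff {A' B' C' : Rep.{u} k G} {i : A ⟶ B} {p : B ⟶ C}
    {i' : A' ⟶ B'} {p' : B' ⟶ C'} (h : IsShortExact i p) (h' : IsShortExact i' p')
    (hB : IsNull (𝟙 B)) (hB' : IsNull (𝟙 B')) :
    IsStablyOrthogonal A A' ↔ IsStablyOrthogonal C C' := by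
  constructor <;> intro hnull f
  · obtain ⟨b, -, hb⟩ := (hB.comp (p ≫ f)).exists_lift h'.surjective
    rw [Category.id_comp] at hb
    obtain ⟨a, ha⟩ := h'.exists_lift (f := i ≫ b) (by
      rw [Category.assoc, hb]
      ext x
      exact (congrArg f.hom (h.map_comp_apply x)).trans (map_zero _))
    exact h.isNull_right h' ha.symm hb.symm hB' (hnull a)
  · obtain ⟨b, hb⟩ := (hB'.precomp (f ≫ i')).exists_extension h.injective
    rw [Category.comp_id] at hb
    obtain ⟨c, hc⟩ := h.exists_desc (f := b ≫ p') (by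
      rw [← Category.assoc, hb]
      ext x
      exact h'.map_comp_apply _)
    exact h.isNull_left h' hb hc hB (hnull c)

lemma IsShortExact.isStablyOrthogonal_iff_shift {i : A ⟶ B} {p : B ⟶ C} (h : IsShortExact i p)
    (hB : IsNull (𝟙 B)) (Y : Rep.{u} k G) :
    IsStablyOrthogonal A Y ↔ IsStablyOrthogonal C (Y ⊗ shift k G) :=
  h.isStablyOrthogonal_iff (isShortExact_tmulRight_one Y) hB (isNull_id_tensor_coregular Y)

lemma IsStablyOrthogonal.of_iso {Z : Rep.{u} k G} (h : IsStablyOrthogonal X Y) (e : Y ≅ Z) :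
    IsStablyOrthogonal X Z := fun f => by
  simpa using (h (f ≫ e.inv)).comp e.hom

lemma isStablyOrthogonal_iff_isTateTrivial_ihom (X Y : Rep.{u} k G) :
    IsStablyOrthogonal X Y ↔ IsTateTrivial ((Rep.ihom X).obj Y) := by
  constructor
  · intro h f hf
    obtain ⟨φ, hφ⟩ := h (Rep.ofHom ⟨f, fun g => LinearMap.ext
      (((Representation.mem_linHom_invariants_iff_isIntertwining _).1 hf).isIntertwining g)⟩)
    exact ⟨φ, congr(($hφ).hom.toLinearMap)⟩
  · intro h f
    obtain ⟨φ, hφ⟩ := h (x := f.hom.toLinearMap)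
      ((Representation.mem_linHom_invariants_iff_isIntertwining _).2
        ⟨fun g x => Rep.hom_comm_apply f g x⟩)
    exact ⟨φ, by ext x; exact LinearMap.congr_fun hφ x⟩

/-- The isomorphism `Hom(X, Y) ⊗ A ≅ Hom(X, Y ⊗ A)` for finite-dimensional `X`. -/
noncomputable def ihomTensorIso (X Y A : Rep.{u} k G) [Module.Finite k X] :
    (Rep.ihom X).obj Y ⊗ A ≅ (Rep.ihom X).obj (Y ⊗ A) :=
  Rep.mkIso <| .mk (rTensorHomEquivHomRTensor k X Y A) fun g => by
    rw [rTensorHomEquivHomRTensor_toLinearMap]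
    exact TensorProduct.ext' fun f a => rfl

end StableHom

section Syzygy

variable {k : Type u} {G : Type} [Field k] [Group G] {A B C X Y : Rep.{u} k G}

lemma isShortExact_image_ι {f : A ⟶ B} {p : B ⟶ C} (hfp : Function.Exact f.hom p.hom)
    (hp : Function.Surjective p.hom) : IsShortExact (Limits.image.ι f) p where
  injective := (Rep.mono_iff_injective _).1 inferInstance
  surjective := hp
  exact := fun b => (hfp b).trans <| by
    have hf (a : A) : (Limits.image.ι f).hom ((Limits.factorThruImage f).hom a) = f.hom a :=
      congr(($(Limits.image.fac f)).hom a)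
    constructor
    · rintro ⟨a, rfl⟩
      exact ⟨_, hf a⟩
    · rintro ⟨c, rfl⟩
      obtain ⟨a, rfl⟩ := (Rep.epi_iff_surjective (Limits.factorThruImage f)).1 inferInstance c
      exact ⟨a, (hf a).symm⟩

lemma function_exact_of_exact {S : ShortComplex (Rep.{u} k G)} (h : S.Exact) :
    Function.Exact S.f.hom S.g.hom := fun b =>
  ⟨(ShortComplex.moduleCat_exact_iff _).1 (h.map (forget₂ (Rep k G) (ModuleCat k))) b, by
    rintro ⟨a, rfl⟩
    exact congr(($S.zero).hom a)⟩

/-- The syzygies `Ωⁿ⁺¹ X` of a projective resolution. -/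
noncomputable def syzygy (P : ProjectiveResolution X) (n : ℕ) : Rep.{u} k G :=
  Limits.image (P.complex.d (n + 1) n)

variable (P : ProjectiveResolution X)

lemma isShortExact_syzygy_zero :
    IsShortExact (Limits.image.ι (P.complex.d 1 0)) (P.π.f 0) :=
  isShortExact_image_ι (function_exact_of_exact P.exact₀)
    ((Rep.epi_iff_surjective _).1 inferInstance)

lemma isShortExact_syzygy_succ (n : ℕ) :
    IsShortExact (Limits.image.ι (P.complex.d (n + 2) (n + 1)))
      (Limits.factorThruImage (P.complex.d (n + 1) n)) :=
  isShortExact_image_ι (fun b => by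
    refine Iff.trans ?_ (function_exact_of_exact (P.exact_succ n) b)
    rw [← map_eq_zero_iff _
      ((Rep.mono_iff_injective (Limits.image.ι (P.complex.d (n + 1) n))).1 inferInstance)]
    exact Eq.congr_left congr(($(Limits.image.fac (P.complex.d (n + 1) n))).hom b))
    ((Rep.epi_iff_surjective _).1 inferInstance)

variable [Fintype G]

lemma isStablyOrthogonal_syzygy_iff (n : ℕ) (Y : Rep.{u} k G) :
    IsStablyOrthogonal (syzygy P n) Y ↔ IsStablyOrthogonal X (Y ⊗ shiftPow k G (n + 1)) := by
  induction n generalizing Y with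
  | zero =>
    have := P.projective 0
    have e : Y ⊗ shift k G ≅ Y ⊗ shiftPow k G 1 := whiskerLeftIso Y (λ_ _).symm
    exact ((isShortExact_syzygy_zero P).isStablyOrthogonal_iff_shift
      (isNull_id_of_projective _) Y).trans ⟨fun h => h.of_iso e, fun h => h.of_iso e.symm⟩
  | succ n ih =>
    have := P.projective (n + 1)
    have e : (Y ⊗ shift k G) ⊗ shiftPow k G (n + 1) ≅ Y ⊗ shiftPow k G (n + 2) :=
      α_ _ _ _ ≪≫ whiskerLeftIso Y (β_ _ _)
    exact ((isShortExact_syzygy_succ P n).isStablyOrthogonal_iff_shift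
      (isNull_id_of_projective _) Y).trans
        ((ih _).trans ⟨fun h => h.of_iso e, fun h => h.of_iso e.symm⟩)

lemma isStablyOrthogonal_syzygy_iff_forall_exists (n : ℕ) (Y : Rep.{u} k G) :
    IsStablyOrthogonal (syzygy P n) Y ↔ ∀ φ : P.complex.X (n + 1) ⟶ Y,
      P.complex.d (n + 2) (n + 1) ≫ φ = 0 → ∃ ψ, P.complex.d (n + 1) n ≫ ψ = φ := by
  have hι : IsShortExact (Limits.image.ι (P.complex.d (n + 2) (n + 1))) _ :=
    isShortExact_syzygy_succ P n
  constructor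
  · intro h φ hφ
    rw [← Limits.image.fac (P.complex.d (n + 2) (n + 1)), Category.assoc] at hφ
    obtain ⟨f, hf⟩ := hι.exists_desc (Limits.zero_of_epi_comp _ hφ)
    obtain ⟨ψ, hψ⟩ := (h f).exists_extension
      ((Rep.mono_iff_injective (Limits.image.ι (P.complex.d (n + 1) n))).1 inferInstance)
    refine ⟨ψ, ?_⟩
    rw [← hf, ← hψ]
    exact (Limits.image.fac_assoc _ ψ).symm
  · intro h (f : Limits.image (P.complex.d (n + 1) n) ⟶ Y)
    have hd : P.complex.d (n + 2) (n + 1) ≫ Limits.factorThruImage (P.complex.d (n + 1) n) = 0 :=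
      Limits.zero_of_comp_mono (Limits.image.ι _) <| by
        rw [Category.assoc, Limits.image.fac, P.complex.d_comp_d]
    obtain ⟨ψ, hψ⟩ := h (Limits.factorThruImage _ ≫ f) <| by
      rw [← Category.assoc, hd, Limits.zero_comp]
    have hf : f = Limits.image.ι _ ≫ ψ :=
      (cancel_epi (Limits.factorThruImage (P.complex.d (n + 1) n))).1
        (hψ.symm.trans (Limits.image.fac_assoc _ ψ).symm)
    have := P.projective n
    rw [hf, ← Category.id_comp ψ]
    exact ((isNull_id_of_projective _).comp ψ).precomp _

end Syzygy

section Ext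

variable {k : Type u} {G : Type} [Field k] [Group G]

instance : (Rep.ofModuleMonoidAlgebra.{u} (k := k) (G := G)).Additive where

lemma finite_restrictScalars (k A M : Type*) [CommRing k] [Ring A] [Algebra k A]
    [Module.Finite k A] [AddCommGroup M] [Module A M] [Module.Finite A M] :
    Module.Finite k (RestrictScalars k A M) :=
  let : Module A (RestrictScalars k A M) := RestrictScalars.moduleOrig k A M
  have : Module.Finite A (RestrictScalars k A M) := inferInstanceAs (Module.Finite A M)
  Module.Finite.trans A _

lemma subsingleton_ext_succ_iff {M : ModuleCat.{u} (MonoidAlgebra k G)}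
    (P : ProjectiveResolution M) (N : ModuleCat.{u} (MonoidAlgebra k G)) (n : ℕ) :
    Subsingleton (((Ext k (ModuleCat (MonoidAlgebra k G)) (n + 1)).obj (Opposite.op M)).obj N) ↔
      ∀ φ : P.complex.X (n + 1) ⟶ N, P.complex.d (n + 2) (n + 1) ≫ φ = 0 →
        ∃ ψ, P.complex.d (n + 1) n ≫ ψ = φ := by
  rw [ModuleCat.isZero_iff_subsingleton.symm, (P.isoExt (R := k) (n + 1) N).isZero_iff,
    ← HomologicalComplex.exactAt_iff_isZero_homology,
    HomologicalComplex.exactAt_iff' _ n (n + 1) (n + 2) (by simp) (by simp),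
    ShortComplex.moduleCat_exact_iff]
  exact Iff.rfl

lemma forall_exists_map_comp_iff {C D : Type*} [Category* C] [Category* D]
    [Limits.HasZeroMorphisms C] [Limits.HasZeroMorphisms D] (F : C ⥤ D) [F.Full] [F.Faithful]
    [F.PreservesZeroMorphisms] {A B B' Y : C} (f : A ⟶ B) (g : B ⟶ B') :
    (∀ φ : F.obj B ⟶ F.obj Y, F.map f ≫ φ = 0 → ∃ ψ, F.map g ≫ ψ = φ) ↔
      ∀ φ : B ⟶ Y, f ≫ φ = 0 → ∃ ψ, g ≫ ψ = φ := by
  simp only [F.map_surjective.forall, F.map_surjective.exists, ← F.map_comp, F.map_eq_zero_iff,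
    F.map_injective.eq_iff]

variable [Fintype G]

lemma subsingleton_ext_succ_iff_isStablyOrthogonal (M N : ModuleCat.{u} (MonoidAlgebra k G))
    (n : ℕ) :
    Subsingleton (((Ext k (ModuleCat (MonoidAlgebra k G)) (n + 1)).obj (Opposite.op M)).obj N) ↔
      IsStablyOrthogonal (Rep.ofModuleMonoidAlgebra.obj M)
        (Rep.ofModuleMonoidAlgebra.obj N ⊗ shiftPow k G (n + 1)) := by
  obtain ⟨P⟩ := (inferInstance : HasProjectiveResolution M).out
  let F := Rep.ofModuleMonoidAlgebra.{u} (k := k) (G := G)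
  rw [subsingleton_ext_succ_iff P, ← isStablyOrthogonal_syzygy_iff (F.mapProjectiveResolution P),
    isStablyOrthogonal_syzygy_iff_forall_exists]
  exact (forall_exists_map_comp_iff F _ _).symm

variable {M N : Type u} [AddCommGroup M] [Module (MonoidAlgebra k G) M]
  [Module.Finite (MonoidAlgebra k G) M] [AddCommGroup N] [Module (MonoidAlgebra k G) N]

lemma subsingleton_ext_iff_isTateTrivial {m : ℕ} (hm : 0 < m) :
    Subsingleton (((Ext k (ModuleCat (MonoidAlgebra k G)) m).obj
      (Opposite.op (ModuleCat.of _ M))).obj (ModuleCat.of _ N)) ↔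
      IsTateTrivial ((Rep.ihom (Rep.ofModuleMonoidAlgebra.obj (ModuleCat.of _ M))).obj
        (Rep.ofModuleMonoidAlgebra.obj (ModuleCat.of _ N)) ⊗ shiftPow k G m) := by
  obtain ⟨n, rfl⟩ := Nat.exists_eq_succ_of_ne_zero hm.ne'
  have : Module.Finite k (Rep.ofModuleMonoidAlgebra.obj (ModuleCat.of (MonoidAlgebra k G) M)) :=
    finite_restrictScalars k (MonoidAlgebra k G) M
  let e := ihomTensorIso (Rep.ofModuleMonoidAlgebra.obj (ModuleCat.of (MonoidAlgebra k G) M))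
    (Rep.ofModuleMonoidAlgebra.obj (ModuleCat.of _ N)) (shiftPow k G (n + 1))
  rw [Nat.succ_eq_add_one, subsingleton_ext_succ_iff_isStablyOrthogonal,
    isStablyOrthogonal_iff_isTateTrivial_ihom]
  exact ⟨fun h => h.of_iso e.symm, fun h => h.of_iso e⟩

end Ext

end ModularRep

open ModularRep in
theorem stmt_15_general.{u} {k : Type u} {G : Type} [Field k] [CharP k 2] [Group G]
    (ι : Type) [Fintype ι] [Nonempty ι] [MulAction G ι] [FaithfulSMul G ι]
    {M N : Type u} [AddCommGroup M] [Module (MonoidAlgebra k G) M]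
    [Module.Finite (MonoidAlgebra k G) M] [AddCommGroup N] [Module (MonoidAlgebra k G) N]
    {d : ℕ} (hd : 0 < d) (hdvd : ∀ i, 0 < i → i < Fintype.card ι → i ∣ d)
    (hm : ∃ m : ℕ, 0 < m ∧ Nontrivial (((Ext k (ModuleCat (MonoidAlgebra k G)) m).obj
      (Opposite.op (ModuleCat.of _ M))).obj (ModuleCat.of _ N))) :
    ∃ t < d, ∃ m₀ : ℕ, ∀ m ≥ m₀, m % d = t →
      Nontrivial (((Ext k (ModuleCat (MonoidAlgebra k G)) m).obj
        (Opposite.op (ModuleCat.of _ M))).obj (ModuleCat.of _ N)) := by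
  have : Finite G := .of_injective _ (MulAction.toPerm_injective (α := G) (β := ι))
  have := Fintype.ofFinite G
  by_contra! hvanish
  obtain ⟨m, hm, hne⟩ := hm
  refine not_subsingleton_iff_nontrivial.2 hne ((subsingleton_ext_iff_isTateTrivial hm).2 ?_)
  obtain ⟨w, hw, hw₀, hwr, hrel⟩ := exists_stiefelWhitney k G ι
  obtain ⟨r, hr⟩ := Nat.exists_eq_succ_of_ne_zero (Fintype.card_pos (α := ι)).ne'
  rw [hr] at hwr hrel
  refine isTateTrivial_of_isLocallyNilpotent hw (N := r)
    (fun X hX => isTateTrivial_of_hasHornerRelation hw hw₀ hwr hrel hX) (fun i hi => ?_)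
    (isShiftOf_tensor_shiftPow _ m)
  refine isLocallyNilpotent_of_isTateTrivial (hw (i + 1)) fun a => ?_
  obtain ⟨b, hab, hmod, hb⟩ := hvanish (a % d) (Nat.mod_lt a hd) (a + 1)
  obtain ⟨c, hc⟩ : i + 1 ∣ b - a :=
    (hdvd _ i.succ_pos (by omega)).trans ((Nat.modEq_iff_dvd' (by omega)).1 hmod.symm)
  obtain rfl : b = a + c * (i + 1) := by rw [mul_comm, ← hc]; omega
  exact ⟨c, (subsingleton_ext_iff_isTateTrivial (by omega)).1 hb⟩

/-- **Statement 14.** Let `k = 𝔽₂` and `G = S₈` the symmetric group on eight letters, and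
let `M, N` be finitely generated left `kG`-modules.  If `Ext_{kG}^m(M,N) ≠ 0` for some
`m > 0`, then there are integers `t` with `0 ≤ t ≤ 419` and `m₀` such that
`Ext_{kG}^m(M,N) ≠ 0` for every `m ≥ m₀` with `m ≡ t (mod 420)`. -/
theorem stmt_15
    (M N : Type) [AddCommGroup M]
    [Module (MonoidAlgebra (ZMod 2) (Equiv.Perm (Fin 8))) M]
    [Module.Finite (MonoidAlgebra (ZMod 2) (Equiv.Perm (Fin 8))) M]
    [AddCommGroup N] [Module (MonoidAlgebra (ZMod 2) (Equiv.Perm (Fin 8))) N]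
    [Module.Finite (MonoidAlgebra (ZMod 2) (Equiv.Perm (Fin 8))) N]
    (hm : ∃ m : ℕ, 0 < m ∧ Nontrivial
      (((_root_.Ext (ZMod 2) (ModuleCat (MonoidAlgebra (ZMod 2) (Equiv.Perm (Fin 8)))) m).obj
        (Opposite.op (ModuleCat.of (MonoidAlgebra (ZMod 2) (Equiv.Perm (Fin 8))) M))).obj
        (ModuleCat.of (MonoidAlgebra (ZMod 2) (Equiv.Perm (Fin 8))) N))) :
    ∃ t : ℕ, t ≤ 419 ∧ ∃ m₀ : ℕ, ∀ m ≥ m₀, m % 420 = t → Nontrivial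
      (((_root_.Ext (ZMod 2) (ModuleCat (MonoidAlgebra (ZMod 2) (Equiv.Perm (Fin 8)))) m).obj
        (Opposite.op (ModuleCat.of (MonoidAlgebra (ZMod 2) (Equiv.Perm (Fin 8))) M))).obj
        (ModuleCat.of (MonoidAlgebra (ZMod 2) (Equiv.Perm (Fin 8))) N)) := by
  obtain ⟨t, ht, h⟩ := stmt_15_general (d := 420) (Fin 8) (by decide)
    (fun i hi hi' => by rw [Fintype.card_fin] at hi'; interval_cases i <;> decide) hm
  exact ⟨t, Nat.le_of_lt_succ ht, h⟩
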